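/- Let ε_1,…,ε_m be i.i.d. standard normal random variables independent of the data X_1ⁿ = {X_1,…,X_n}. Suppose there exist constants 0 < c₁ ≤ C₁ and 0 < c₂ < 1/2 such that c₁ ≤ σ̲²(q) ≤ σ̄²(q) ≤ C₁ and q·D_n·log^{5/2} p ≤ C₁·n^{1/2−c₂}. Then there exist constants c, c', C, C' > 0 depending only on c₁, c₂, C₁ such that, with probability at least 1 − C·n^{−c} − (m−1)·b_r, one has sup_{t∈ℝ} | Pr( max_{1≤j≤p} (mq)^{−1/2} Σ_{l=1}^m ε_l·S_{lj} ≤ t | X_1ⁿ ) − Pr( max_{1≤j≤p} Y̌_j ≤ t ) | ≤ C'·n^{−c'}. -/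

import Mathlib

/-!
Formalization of results from "Testing Many Moment Inequalities"
(Chernozhukov, Chetverikov, Kato).

We model an i.i.d. sample `X_1, …, X_n` of random vectors in `ℝ^p` with common
distribution `Q` by the coordinate process on the product space
`Fin n → (Fin p → ℝ)` equipped with the product measure `sampLaw n Q`.
Conditional bootstrap quantiles (given the data) are represented by taking, for
each realized sample, the quantile of the corresponding bootstrap statistic
under a fresh product measure (standard Gaussian multipliers for the multiplier
bootstrap, uniform resampling indices for the empirical bootstrap).
-/

open MeasureTheory ProbabilityTheory Filter
open scoped ENNReal NNReal BigOperators Classical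

noncomputable section

namespace ManyMoment

/-- Standard normal CDF `Φ`. -/
def Phi (x : ℝ) : ℝ := ((gaussianReal 0 1) (Set.Iic x)).toReal

/-- Standard normal quantile function `Φ⁻¹`. -/
def PhiInv (a : ℝ) : ℝ := sInf {x : ℝ | a ≤ Phi x}

/-- One-step self-normalized (SN) critical value `c^{SN}(a)`. -/
def cSN (n p : ℕ) (a : ℝ) : ℝ :=
  PhiInv (1 - a / (p : ℝ)) / Real.sqrt (1 - PhiInv (1 - a / (p : ℝ)) ^ 2 / (n : ℝ))

/-- Product of `n` standard Gaussian distributions (law of the multipliers). -/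
def gaussPi (n : ℕ) : Measure (Fin n → ℝ) := Measure.pi fun _ => gaussianReal 0 1

/-- Product of `n` uniform distributions on `Fin n` (law of resampling indices). -/
def unifPi (n : ℕ) : Measure (Fin n → Fin n) :=
  Measure.pi fun _ => (n : ℝ≥0∞)⁻¹ • Measure.count

variable {ι : Type*} [Fintype ι]

/-- Sample mean `μ̂_j`. -/
def muHatD (n : ℕ) (d : Fin n → ι → ℝ) (j : ι) : ℝ := (∑ i, d i j) / (n : ℝ)

/-- Sample standard deviation `σ̂_j`. -/
def sigmaHatD (n : ℕ) (d : Fin n → ι → ℝ) (j : ι) : ℝ :=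
  Real.sqrt ((∑ i, (d i j - muHatD n d j) ^ 2) / (n : ℝ))

/-- The test statistic `T = max_j √n μ̂_j / σ̂_j`. -/
def TstatD (n : ℕ) (d : Fin n → ι → ℝ) : ℝ :=
  ⨆ j : ι, Real.sqrt n * muHatD n d j / sigmaHatD n d j

/-- Multiplier bootstrap statistic `W^{MB}` (as a function of the multipliers `e`). -/
def WMBD (n : ℕ) (d : Fin n → ι → ℝ) (e : Fin n → ℝ) : ℝ :=
  ⨆ j : ι, Real.sqrt n * ((∑ i, e i * (d i j - muHatD n d j)) / (n : ℝ)) / sigmaHatD n d j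

/-- One-step multiplier bootstrap critical value: conditional `(1-a)`-quantile of `W^{MB}`
given the data `d`. -/
def cMBD (n : ℕ) (d : Fin n → ι → ℝ) (a : ℝ) : ℝ :=
  sInf {t : ℝ | 1 - a ≤ (gaussPi n {e | WMBD n d e ≤ t}).toReal}

/-- Empirical bootstrap statistic `W^{EB}` (as a function of the resampling indices `k`). -/
def WEBD (n : ℕ) (d : Fin n → ι → ℝ) (k : Fin n → Fin n) : ℝ :=
  ⨆ j : ι, Real.sqrt n * ((∑ i, (d (k i) j - muHatD n d j)) / (n : ℝ)) / sigmaHatD n d j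

/-- One-step empirical bootstrap critical value: conditional `(1-a)`-quantile of `W^{EB}`
given the data `d`. -/
def cEBD (n : ℕ) (d : Fin n → ι → ℝ) (a : ℝ) : ℝ :=
  sInf {t : ℝ | 1 - a ≤ (unifPi n {k | WEBD n d k ≤ t}).toReal}

/-- Multiplier bootstrap statistic restricted to a set `J` of inequalities (0 if `J = ∅`). -/
def WMBDsel (n : ℕ) (J : Finset ι) (d : Fin n → ι → ℝ) (e : Fin n → ℝ) : ℝ :=
  if h : J.Nonempty then
    J.sup' h fun j => Real.sqrt n * ((∑ i, e i * (d i j - muHatD n d j)) / (n : ℝ)) / sigmaHatD n d j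
  else 0

/-- Empirical bootstrap statistic restricted to a set `J` of inequalities (0 if `J = ∅`). -/
def WEBDsel (n : ℕ) (J : Finset ι) (d : Fin n → ι → ℝ) (k : Fin n → Fin n) : ℝ :=
  if h : J.Nonempty then
    J.sup' h fun j => Real.sqrt n * ((∑ i, (d (k i) j - muHatD n d j)) / (n : ℝ)) / sigmaHatD n d j
  else 0

/-- Conditional `lvl`-quantile of the restricted multiplier bootstrap statistic. -/
def quantMBsel (n : ℕ) (J : Finset ι) (d : Fin n → ι → ℝ) (lvl : ℝ) : ℝ :=
  sInf {t : ℝ | lvl ≤ (gaussPi n {e | WMBDsel n J d e ≤ t}).toReal}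

/-- Conditional `lvl`-quantile of the restricted empirical bootstrap statistic. -/
def quantEBsel (n : ℕ) (J : Finset ι) (d : Fin n → ι → ℝ) (lvl : ℝ) : ℝ :=
  sInf {t : ℝ | lvl ≤ (unifPi n {k | WEBDsel n J d k ≤ t}).toReal}

/-- The SN-selected set `Ĵ_{SN} = {j : √n μ̂_j/σ̂_j > -2 c^{SN}(b)}`. -/
def JhatSN (n p : ℕ) (b : ℝ) (d : Fin n → Fin p → ℝ) : Finset (Fin p) :=
  Finset.univ.filter fun j =>
    -2 * cSN n p b < Real.sqrt n * muHatD n d j / sigmaHatD n d j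

/-- `k̂ = |Ĵ_{SN}|`. -/
def khat (n p : ℕ) (b : ℝ) (d : Fin n → Fin p → ℝ) : ℕ := (JhatSN n p b d).card

/-- Two-step SN critical value `c^{SN,2S}(a)` (with selection at level `b`). -/
def cSN2S (n p : ℕ) (a b : ℝ) (d : Fin n → Fin p → ℝ) : ℝ :=
  if khat n p b d = 0 then 0
  else
    PhiInv (1 - (a - 2 * b) / (khat n p b d : ℝ)) /
      Real.sqrt (1 - PhiInv (1 - (a - 2 * b) / (khat n p b d : ℝ)) ^ 2 / (n : ℝ))

/-- The MB-selected set `Ĵ_{MB} = {j : √n μ̂_j/σ̂_j > -2 c^{MB}(b)}`. -/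
def JhatMB (n : ℕ) (b : ℝ) (d : Fin n → ι → ℝ) : Finset ι :=
  Finset.univ.filter fun j =>
    -2 * cMBD n d b < Real.sqrt n * muHatD n d j / sigmaHatD n d j

/-- The EB-selected set `Ĵ_{EB} = {j : √n μ̂_j/σ̂_j > -2 c^{EB}(b)}`. -/
def JhatEB (n : ℕ) (b : ℝ) (d : Fin n → ι → ℝ) : Finset ι :=
  Finset.univ.filter fun j =>
    -2 * cEBD n d b < Real.sqrt n * muHatD n d j / sigmaHatD n d j

/-- Two-step multiplier bootstrap critical value `c^{MB,2S}(a)`: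
conditional `(1-a+2b)`-quantile of the restricted MB statistic. -/
def cMB2S (n : ℕ) (a b : ℝ) (d : Fin n → ι → ℝ) : ℝ :=
  quantMBsel n (JhatMB n b d) d (1 - a + 2 * b)

/-- Two-step empirical bootstrap critical value `c^{EB,2S}(a)`. -/
def cEB2S (n : ℕ) (a b : ℝ) (d : Fin n → ι → ℝ) : ℝ :=
  quantEBsel n (JhatEB n b d) d (1 - a + 2 * b)

/-- Hybrid MB critical value `c^{MB,H}(a)` (SN selection, MB quantile). -/
def cMBH (n p : ℕ) (a b : ℝ) (d : Fin n → Fin p → ℝ) : ℝ :=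
  quantMBsel n (JhatSN n p b d) d (1 - a + 2 * b)

/-- Hybrid EB critical value `c^{EB,H}(a)` (SN selection, EB quantile). -/
def cEBH (n p : ℕ) (a b : ℝ) (d : Fin n → Fin p → ℝ) : ℝ :=
  quantEBsel n (JhatSN n p b d) d (1 - a + 2 * b)

/-- Population mean `μ_j = E[X_{1j}]` under the common distribution `Q`. -/
def popMean (Q : Measure (ι → ℝ)) (j : ι) : ℝ := ∫ x, x j ∂Q

/-- Population standard deviation `σ_j = (Var X_{1j})^{1/2}`. -/
def popSD (Q : Measure (ι → ℝ)) (j : ι) : ℝ := Real.sqrt (variance (fun x => x j) Q)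

/-- Standardized coordinate `Z_{1j} = (X_{1j} - μ_j)/σ_j`. -/
def Znorm (Q : Measure (ι → ℝ)) (j : ι) (x : ι → ℝ) : ℝ := (x j - popMean Q j) / popSD Q j

/-- `M_{n,k} = max_j (E|Z_{1j}|^k)^{1/k}`. -/
def Mnk (Q : Measure (ι → ℝ)) (k : ℕ) : ℝ :=
  ⨆ j : ι, (∫ x, |Znorm Q j x| ^ k ∂Q) ^ ((k : ℝ)⁻¹)

/-- `B_n = (E[max_j Z_{1j}^4])^{1/4}`. -/
def Bn4 (Q : Measure (ι → ℝ)) : ℝ :=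
  (∫ x, ⨆ j : ι, Znorm Q j x ^ 4 ∂Q) ^ ((4 : ℝ)⁻¹)

/-- Law of an i.i.d. sample of size `n` drawn from `Q`. -/
def sampLaw (n : ℕ) (Q : Measure (ι → ℝ)) : Measure (Fin n → ι → ℝ) :=
  Measure.pi fun _ => Q

end ManyMoment

namespace ManyMoment

/-! ### Dependent data: blocks, mixing coefficients, block multiplier bootstrap

The sample `X_1,…,X_n` (possibly dependent, identically distributed) is modeled as the
coordinate process on `Fin n → (Fin p → ℝ)` under a joint law `Pm`. -/

/-- Sum of the coordinates `X_{ij}`, `i ∈ {a+1,…,a+q}` (0-based: `a ≤ i < a+q`). -/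
def blockSum (n p : ℕ) (a q : ℕ) (j : Fin p) (ω : Fin n → Fin p → ℝ) : ℝ :=
  ∑ i : Fin n, if a ≤ (i : ℕ) ∧ (i : ℕ) < a + q then ω i j else 0

/-- `σ̄²(q) = max_j max_I Var(q^{-1/2} Σ_{i∈I} X_{ij})` over blocks `I` of length `q`. -/
def sigmaBarSq (n p : ℕ) (Pm : Measure (Fin n → Fin p → ℝ)) (q : ℕ) : ℝ :=
  ⨆ j : Fin p, ⨆ a : Fin (n - q + 1),
    variance (fun ω => blockSum n p (a : ℕ) q j ω / Real.sqrt q) Pm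

/-- `σ̲²(q) = min_j min_I Var(q^{-1/2} Σ_{i∈I} X_{ij})` over blocks `I` of length `q`. -/
def sigmaLowSq (n p : ℕ) (Pm : Measure (Fin n → Fin p → ℝ)) (q : ℕ) : ℝ :=
  ⨅ j : Fin p, ⨅ a : Fin (n - q + 1),
    variance (fun ω => blockSum n p (a : ℕ) q j ω / Real.sqrt q) Pm

/-- The `β`-dependence coefficient between two sub-σ-fields: half the supremum over finite
measurable partitions of `Σ_i Σ_j |Pm(A_i ∩ B_j) - Pm(A_i)Pm(B_j)|`. -/
def betaDep {Ω : Type*} [MeasurableSpace Ω] (Pm : Measure Ω)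
    (m₁ m₂ : MeasurableSpace Ω) : ℝ :=
  (1 / 2) * sSup {x : ℝ |
    ∃ (I J : ℕ) (A : Fin I → Set Ω) (B : Fin J → Set Ω),
      (∀ i, MeasurableSet[m₁] (A i)) ∧ Pairwise (Function.onFun Disjoint A) ∧
      (⋃ i, A i) = Set.univ ∧
      (∀ j, MeasurableSet[m₂] (B j)) ∧ Pairwise (Function.onFun Disjoint B) ∧
      (⋃ j, B j) = Set.univ ∧
      x = ∑ i, ∑ j, |(Pm (A i ∩ B j)).toReal - (Pm (A i)).toReal * (Pm (B j)).toReal|}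

/-- σ-field generated by the coordinates `X_i`, `i < l` (0-based), i.e. `σ(X_1,…,X_l)`. -/
def sigmaUpTo (n p : ℕ) (l : ℕ) : MeasurableSpace (Fin n → Fin p → ℝ) :=
  ⨆ i : Fin n, ⨆ _ : (i : ℕ) < l, MeasurableSpace.comap (fun ω => ω i) inferInstance

/-- σ-field generated by the coordinates `X_i`, `i ≥ a` (0-based). -/
def sigmaFrom (n p : ℕ) (a : ℕ) : MeasurableSpace (Fin n → Fin p → ℝ) :=
  ⨆ i : Fin n, ⨆ _ : a ≤ (i : ℕ), MeasurableSpace.comap (fun ω => ω i) inferInstance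

/-- The `k`-th `β`-mixing coefficient
`b_k = max_{1 ≤ l ≤ n-k} β(σ(X_1,…,X_l), σ(X_{l+k},…,X_n))`. -/
def bmix (n p : ℕ) (Pm : Measure (Fin n → Fin p → ℝ)) (k : ℕ) : ℝ :=
  ⨆ l : Fin (n - k),
    betaDep Pm (sigmaUpTo n p ((l : ℕ) + 1)) (sigmaFrom n p ((l : ℕ) + k))

/-- Number of large blocks `m = ⌊n/(q+r)⌋`. -/
def nBlocks (n q r : ℕ) : ℕ := n / (q + r)

/-- Centered large-block sum `Σ_{i ∈ I_l} (X_{ij} - μ̂_j)` for the `l`-th large block. -/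
def blockSumC (n p : ℕ) (a q : ℕ) (j : Fin p) (ω : Fin n → Fin p → ℝ) : ℝ :=
  ∑ i : Fin n, if a ≤ (i : ℕ) ∧ (i : ℕ) < a + q then ω i j - muHatD n ω j else 0

/-- Block multiplier bootstrap statistic
`W̌ = max_j (mq)^{-1/2} Σ_l ε_l Σ_{i∈I_l} (X_{ij} - μ̂_j)` as a function of the
block multipliers `e`. -/
def WBMB (n p q r : ℕ) (ω : Fin n → Fin p → ℝ) (e : Fin (nBlocks n q r) → ℝ) : ℝ :=
  ⨆ j : Fin p,
    (∑ l : Fin (nBlocks n q r), e l * blockSumC n p ((l : ℕ) * (q + r)) q j ω) /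
      Real.sqrt ((nBlocks n q r * q : ℕ))

/-- BMB critical value: conditional `(1-a)`-quantile of `W̌` given the data. -/
def cBMB (n p q r : ℕ) (a : ℝ) (ω : Fin n → Fin p → ℝ) : ℝ :=
  sInf {t : ℝ | 1 - a ≤ (gaussPi (nBlocks n q r) {e | WBMB n p q r ω e ≤ t}).toReal}

/-- Non-Studentized statistic `Ť = max_j √n μ̂_j`. -/
def TcheckD (n p : ℕ) (ω : Fin n → Fin p → ℝ) : ℝ :=
  ⨆ j : Fin p, Real.sqrt n * muHatD n ω j

/-- Covariance matrix `(mq)⁻¹ Σ_l E[S_{lj} S_{lk}]` of the block sums (for mean-zero data),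
the covariance of the approximating Gaussian vector `Y̌`. -/
def blockCov (n p q r : ℕ) (Pm : Measure (Fin n → Fin p → ℝ)) (j k : Fin p) : ℝ :=
  ((nBlocks n q r * q : ℕ) : ℝ)⁻¹ *
    ∑ l : Fin (nBlocks n q r),
      ∫ ω, blockSum n p ((l : ℕ) * (q + r)) q j ω *
            blockSum n p ((l : ℕ) * (q + r)) q k ω ∂Pm

end ManyMoment

namespace ManyMoment

/-- Multiplier block bootstrap statistic `max_j (mq)^{-1/2} Σ_l ε_l S_{lj}` built from the
(uncentered) large-block sums, as a function of the block multipliers `e`. -/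
def WBMBraw (n p q r : ℕ) (ω : Fin n → Fin p → ℝ) (e : Fin (nBlocks n q r) → ℝ) : ℝ :=
  ⨆ j : Fin p,
    (∑ l : Fin (nBlocks n q r), e l * blockSum n p ((l : ℕ) * (q + r)) q j ω) /
      Real.sqrt ((nBlocks n q r * q : ℕ))

/-!
Given the data, the bootstrap statistic is the maximum of a centred Gaussian vector with covariance
`Σ̂ = (mq)⁻¹ ∑ S_l S_lᵀ`, and `max_j Y̌_j` is the maximum of a centred Gaussian vector with
covariance `Σ = E Σ̂`. So it is enough to compare the two laws in terms of
`Δ = max_{j,k} |Σ̂_{jk} - Σ_{jk}|`, and to show that `Δ` is small with high probability.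

*Gaussian comparison.* Replace the indicator of `max_j y_j ≤ t` by a smooth function, varying over a
length `ε`, of the soft maximum `β⁻¹ log ∑ exp (β y_j)`. Slepian interpolation along a rotation of
two independent Gaussian vectors, with Gaussian integration by parts, bounds the difference of the
smoothed probabilities by `Δ` times second derivatives, which are of order `log p / ε²` when
`β = 2 log p / ε`. Returning to the indicator costs the probability that `max_j Y̌_j` lies in an
interval of length of order `ε`. Since the variances lie in `[c₁, C₁]`, that probability is of order
`ε √(log p)`: apply Gaussian integration by parts to a sigmoid of the soft maximum.

*Decoupling.* For probability measures on a finite set, `μ s - ν s` is at most half the `ℓ¹`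
distance, so finite-valued functions of the past and of the future can be made independent at the
cost of the `β`-coefficient. Finite unions of rectangles approximate every measurable set, and
separating the `m` large blocks one at a time costs `(m - 1) b_r`.

*Concentration.* For independent blocks, the products `S_{lj} S_{lk}` are bounded by `(q D)²` and
have second moments at most `(q D)² q C₁`, so Bernstein's inequality and a union bound over the `p²`
entries give `Δ ≤ A n^{-c₂/4} / log² p` with probability at least `1 - n^{-c₂/4}`.

On this event, `ε = n^{-c₂/12} / √(log p)` makes both error terms multiples of `n^{-c₂/12}`.
-/

open scoped Matrix MatrixOrder Topology

/-! ### Functions with explicit partial derivatives -/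

section Partials

variable {ι κ : Type*} [Fintype ι]

/-- `φ` is differentiable on `ℝ^ι` with partial derivatives `φ' k`. Keeping the partial derivatives
explicit, instead of using `fderiv`, lets the closed formulas for the soft maximum be used directly
in the Gaussian integrations by parts. -/
def HasPartials (φ : (ι → ℝ) → ℝ) (φ' : ι → (ι → ℝ) → ℝ) : Prop :=
  ∀ y, HasFDerivAt φ (∑ k, φ' k y • (ContinuousLinearMap.proj k : (ι → ℝ) →L[ℝ] ℝ)) y

variable {φ ψ : (ι → ℝ) → ℝ} {φ' ψ' : ι → (ι → ℝ) → ℝ}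

lemma HasPartials.continuous (h : HasPartials φ φ') : Continuous φ :=
  continuous_iff_continuousAt.2 fun y => (h y).continuousAt

lemma HasPartials.hasDerivAt_comp (h : HasPartials φ φ') {c : ℝ → ι → ℝ} {c' : ι → ℝ} {s : ℝ}
    (hc : HasDerivAt c c' s) : HasDerivAt (fun x => φ (c x)) (∑ k, φ' k (c s) * c' k) s :=
  ((h (c s)).comp_hasDerivAt s hc).congr_deriv (by simp)

lemma HasPartials.mul (h : HasPartials φ φ') (h' : HasPartials ψ ψ') :
    HasPartials (fun y => φ y * ψ y) (fun k y => φ' k y * ψ y + φ y * ψ' k y) := by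
  intro y
  refine ((h y).mul (h' y)).congr_fderiv ?_
  simp only [Finset.smul_sum, smul_smul, add_smul, Finset.sum_add_distrib, mul_comm (ψ y)]
  exact add_comm _ _

lemma HasPartials.comp (h : HasPartials φ φ') {g g' : ℝ → ℝ}
    (hg : ∀ y, HasDerivAt g (g' (φ y)) (φ y)) :
    HasPartials (fun y => g (φ y)) (fun k y => g' (φ y) * φ' k y) := fun y =>
  ((hg y).comp_hasFDerivAt y (h y)).congr_fderiv (by simp only [Finset.smul_sum, smul_smul])

lemma HasPartials.sum (s : Finset κ) {φ : κ → (ι → ℝ) → ℝ} {φ' : κ → ι → (ι → ℝ) → ℝ}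
    (h : ∀ i, HasPartials (φ i) (φ' i)) :
    HasPartials (fun y => ∑ i ∈ s, φ i y) (fun k y => ∑ i ∈ s, φ' i k y) := by
  intro y
  refine (HasFDerivAt.fun_sum fun i (_ : i ∈ s) => h i y).congr_fderiv ?_
  simp only [Finset.sum_smul, Finset.sum_comm (s := s)]

lemma hasPartials_apply (j : ι) :
    HasPartials (fun y : ι → ℝ => y j) (fun k _ => if k = j then 1 else 0) := fun y =>
  (hasFDerivAt_apply (𝕜 := ℝ) j y).congr_fderiv (by simp)

lemma HasPartials.comp_smul_add (h : HasPartials φ φ') (c : ℝ) (b : ι → ℝ) :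
    HasPartials (fun y => φ (c • y + b)) (fun k y => c * φ' k (c • y + b)) := by
  intro y
  refine ((h _).comp y (((hasFDerivAt_id y).const_smul c).add_const b)).congr_fderiv ?_
  ext v
  simp [Finset.mul_sum, mul_assoc]

lemma HasPartials.comp_vecMul [Fintype κ] (h : HasPartials φ φ') (V : Matrix κ ι ℝ) :
    HasPartials (fun ξ => φ (ξ ᵥ* V)) (fun l ξ => ∑ k, V l k * φ' k (ξ ᵥ* V)) := by
  intro ξ
  have hV : HasFDerivAt (fun ξ : κ → ℝ => ξ ᵥ* V)
      (LinearMap.toContinuousLinearMap (Matrix.vecMulLinear V)) ξ :=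
    (LinearMap.toContinuousLinearMap (Matrix.vecMulLinear V)).hasFDerivAt
  refine ((h _).comp ξ hV).congr_fderiv ?_
  ext v
  simp only [ContinuousLinearMap.comp_apply, sum_apply, smul_apply,
    ContinuousLinearMap.proj_apply, smul_eq_mul, LinearMap.coe_toContinuousLinearMap',
    Matrix.vecMulLinear_apply, Matrix.vecMul, dotProduct, Finset.mul_sum, Finset.sum_mul]
  rw [Finset.sum_comm]
  exact Finset.sum_congr rfl fun _ _ => Finset.sum_congr rfl fun _ _ => by ring

end Partials

/-! ### Centred Gaussian vectors -/

section Gaussian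

variable {ι κ : Type*} [Fintype ι] [Fintype κ] {S T : Matrix ι ι ℝ} {μ ν : Measure (ι → ℝ)}

/-- `μ` is the centred Gaussian law on `ℝ^ι` with covariance matrix `S`, encoded à la Cramér–Wold:
each linear form `a ⬝ᵥ y` has law `N(0, aᵀ S a)`. -/
structure IsCenteredGaussian (S : Matrix ι ι ℝ) (μ : Measure (ι → ℝ)) : Prop where
  posSemidef : S.PosSemidef
  map_dotProduct (a : ι → ℝ) :
    μ.map (fun y => a ⬝ᵥ y) = gaussianReal 0 (a ⬝ᵥ S *ᵥ a).toNNReal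

instance (N : ℕ) : IsProbabilityMeasure (gaussPi N) := by
  unfold gaussPi; infer_instance

lemma measurable_dotProduct (a : ι → ℝ) : Measurable fun y : ι → ℝ => a ⬝ᵥ y := by
  unfold dotProduct; fun_prop

lemma continuous_vecMul {ι κ : Type*} [Fintype κ] (V : Matrix κ ι ℝ) :
    Continuous fun ξ : κ → ℝ => ξ ᵥ* V :=
  continuous_id.matrix_vecMul continuous_const

lemma isCenteredGaussian_gaussPi (N : ℕ) : IsCenteredGaussian 1 (gaussPi N) where
  posSemidef := .one
  map_dotProduct a := by
    set L : StrongDual ℝ (EuclideanSpace ℝ (Fin N)) := innerSL ℝ (WithLp.toLp 2 a)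
    have hL : (fun y => a ⬝ᵥ y) = L ∘ WithLp.toLp 2 := by
      ext y
      simp [L, EuclideanSpace.inner_eq_star_dotProduct, dotProduct_comm]
    rw [hL, ← Measure.map_map (by fun_prop) (by fun_prop), gaussPi, map_pi_eq_stdGaussian,
      IsGaussian.map_eq_gaussianReal, integral_strongDual_stdGaussian,
      variance_dual_stdGaussian]
    simp [L, EuclideanSpace.real_norm_sq_eq, dotProduct, ← sq]

namespace IsCenteredGaussian

lemma isProbabilityMeasure (hμ : IsCenteredGaussian S μ) : IsProbabilityMeasure μ :=
  ⟨by simpa [hμ.map_dotProduct, Measure.map_apply (measurable_dotProduct (0 : ι → ℝ))]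
    using congrArg (· Set.univ) (hμ.map_dotProduct 0)⟩

lemma map_vecMul (hμ : IsCenteredGaussian S μ) (V : Matrix ι κ ℝ) :
    IsCenteredGaussian (Vᵀ * S * V) (μ.map (· ᵥ* V)) where
  posSemidef := by simpa using hμ.posSemidef.conjTranspose_mul_mul_same V
  map_dotProduct a := by
    have hcomp : (fun y => a ⬝ᵥ y) ∘ (· ᵥ* V) = fun y => (V *ᵥ a) ⬝ᵥ y := by
      ext y
      rw [Function.comp_apply, dotProduct_comm, ← Matrix.dotProduct_mulVec, dotProduct_comm]
    rw [Measure.map_map (measurable_dotProduct a) (continuous_vecMul V).measurable, hcomp,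
      hμ.map_dotProduct]
    simp only [← Matrix.mulVec_mulVec, Matrix.dotProduct_mulVec a, Matrix.vecMul_transpose]

/-- Cramér–Wold: characteristic functions on `ℝ^ι` only see linear forms. -/
lemma ext (hμ : IsCenteredGaussian S μ) (hν : IsCenteredGaussian S ν) : μ = ν := by
  have := hμ.isProbabilityMeasure
  have := hν.isProbabilityMeasure
  refine Measure.ext_of_charFunDual (funext fun L => ?_)
  have hL : (L : (ι → ℝ) → ℝ) = fun y => (fun k => L fun j => if k = j then 1 else 0) ⬝ᵥ y := by
    ext y
    simpa [dotProduct, mul_comm] using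
      (L : (ι → ℝ) →ₗ[ℝ] ℝ).pi_apply_eq_sum_univ y
  rw [charFunDual_eq_charFun_map_one, charFunDual_eq_charFun_map_one, hL, hμ.map_dotProduct,
    hν.map_dotProduct]

lemma exists_eq_map_gaussPi (hμ : IsCenteredGaussian S μ) :
    ∃ (N : ℕ) (V : Matrix (Fin N) ι ℝ), Vᵀ * V = S ∧ μ = (gaussPi N).map (· ᵥ* V) := by
  obtain ⟨A, hA⟩ := CStarAlgebra.nonneg_iff_eq_star_mul_self.1 hμ.posSemidef.nonneg
  replace hA : S = Aᵀ * A := hA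
  let e := Fintype.equivFin ι
  have hV : (A.submatrix e.symm id)ᵀ * A.submatrix e.symm id = S := by
    rw [hA, Matrix.transpose_submatrix, Matrix.submatrix_mul_equiv, Matrix.submatrix_id_id]
  refine ⟨_, A.submatrix e.symm id, hV, hμ.ext ?_⟩
  simpa only [Matrix.mul_one, hV] using
    (isCenteredGaussian_gaussPi _).map_vecMul (A.submatrix e.symm id)

lemma map_eval (hμ : IsCenteredGaussian S μ) (j : ι) :
    μ.map (fun y => y j) = gaussianReal 0 (S j j).toNNReal := by
  simpa using hμ.map_dotProduct (Pi.single j 1)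

lemma integrable_eval (hμ : IsCenteredGaussian S μ) (j : ι) : Integrable (fun y => y j) μ := by
  have h : Integrable id (μ.map fun y => y j) := by
    rw [hμ.map_eval]
    exact (memLp_id_gaussianReal _).integrable le_rfl
  exact h.comp_measurable (measurable_pi_apply j)

lemma integrable_mul_eval (hμ : IsCenteredGaussian S μ) (j : ι) {φ : (ι → ℝ) → ℝ}
    (hφ : Continuous φ) {K : ℝ} (hK : ∀ y, |φ y| ≤ K) : Integrable (fun y => y j * φ y) μ :=
  (hμ.integrable_eval j).mul_bdd hφ.aestronglyMeasurable (ae_of_all _ hK)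

lemma integrable_exp_mul_eval (hμ : IsCenteredGaussian S μ) (j : ι) (t : ℝ) :
    Integrable (fun y => Real.exp (t * y j)) μ := by
  have h : Integrable (fun x => Real.exp (t * x)) (μ.map fun y => y j) := by
    rw [hμ.map_eval]
    exact integrable_exp_mul_gaussianReal t
  exact h.comp_measurable (measurable_pi_apply j)

lemma integral_exp_mul_eval (hμ : IsCenteredGaussian S μ) (j : ι) (t : ℝ) :
    ∫ y, Real.exp (t * y j) ∂μ = Real.exp (S j j * t ^ 2 / 2) := by
  have := mgf_gaussianReal (hμ.map_eval j) t
  rw [mgf] at this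
  simpa [Real.coe_toNNReal _ hμ.posSemidef.diag_nonneg] using this

end IsCenteredGaussian

end Gaussian

/-! ### Gaussian integration by parts -/

section Stein

lemma hasDerivAt_gaussianPDFReal (m : ℝ) (v : ℝ≥0) (x : ℝ) :
    HasDerivAt (gaussianPDFReal m v) (-((x - m) / v) * gaussianPDFReal m v x) x := by
  have h : HasDerivAt (fun x : ℝ => -(x - m) ^ 2 / (2 * (v : ℝ))) (-((x - m) / v)) x := by
    refine ((((hasDerivAt_id x).sub_const m).pow 2).neg.div_const (2 * (v : ℝ))).congr_deriv ?_
    simp only [id_eq, Nat.cast_ofNat, Nat.add_one_sub_one, pow_one, mul_one]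
    rw [neg_div, mul_div_mul_left _ _ two_ne_zero]
  refine (h.exp.const_mul _).congr_deriv ?_
  rw [gaussianPDFReal]
  ring

lemma integrable_sub_mul_gaussianPDFReal (m : ℝ) {v : ℝ≥0} (hv : v ≠ 0) :
    Integrable fun x => (x - m) * gaussianPDFReal m v x := by
  have h : Integrable (fun x : ℝ => x - m) (gaussianReal m v) :=
    ((memLp_id_gaussianReal (1 : ℝ≥0)).integrable le_rfl).sub (integrable_const m)
  rw [gaussianReal_of_var_ne_zero _ hv, integrable_withDensity_iff_integrable_smul'
    (measurable_gaussianPDF _ _) (ae_of_all _ fun _ => gaussianPDF_lt_top)] at h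
  simpa only [toReal_gaussianPDF, smul_eq_mul, mul_comm] using h

lemma integral_sub_mul_gaussianReal (m : ℝ) (v : ℝ≥0) {f f' : ℝ → ℝ}
    (hf : ∀ x, HasDerivAt f (f' x) x) (hf' : Continuous f') {K K' : ℝ} (hK : ∀ x, |f x| ≤ K)
    (hK' : ∀ x, |f' x| ≤ K') :
    ∫ x, (x - m) * f x ∂(gaussianReal m v) = v * ∫ x, f' x ∂(gaussianReal m v) := by
  rcases eq_or_ne v 0 with rfl | hv
  · simp [gaussianReal_zero_var]
  have hfc : Continuous f := continuous_iff_continuousAt.2 fun x => (hf x).continuousAt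
  have hpdf := integrable_gaussianPDFReal m v
  have hfpdf' : Integrable fun x => f x * (-((x - m) / v) * gaussianPDFReal m v x) := by
    convert ((integrable_sub_mul_gaussianPDFReal m hv).const_mul (-(v : ℝ)⁻¹)).bdd_mul
      hfc.aestronglyMeasurable (ae_of_all _ hK) using 2
    ring
  have hparts := integral_mul_deriv_eq_deriv_mul_of_integrable (A := ℝ)
    (fun x _ => hf x) (fun x _ => hasDerivAt_gaussianPDFReal m v x) hfpdf'
    (hpdf.bdd_mul hf'.aestronglyMeasurable (ae_of_all _ hK'))
    (hpdf.bdd_mul hfc.aestronglyMeasurable (ae_of_all _ hK))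
  rw [integral_gaussianReal_eq_integral_smul hv, integral_gaussianReal_eq_integral_smul hv]
  have hv' : (v : ℝ) ≠ 0 := by exact_mod_cast hv
  calc ∫ x, gaussianPDFReal m v x • ((x - m) * f x)
      = -v * ∫ x, f x * (-((x - m) / v) * gaussianPDFReal m v x) := by
        rw [← integral_const_mul]
        congr 1 with x
        simp only [smul_eq_mul]
        field_simp
    _ = v * ∫ x, gaussianPDFReal m v x • f' x := by
        rw [hparts, neg_mul_neg]
        simp only [smul_eq_mul, mul_comm]

lemma integral_apply_mul_gaussPi {N : ℕ} (l : Fin N) {φ : (Fin N → ℝ) → ℝ}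
    {φ' : Fin N → (Fin N → ℝ) → ℝ} (h : HasPartials φ φ') (hφ' : Continuous (φ' l))
    {K K' : ℝ} (hK : ∀ ξ, |φ ξ| ≤ K) (hK' : ∀ ξ, |φ' l ξ| ≤ K') :
    ∫ ξ, ξ l * φ ξ ∂(gaussPi N) = ∫ ξ, φ' l ξ ∂(gaussPi N) := by
  obtain ⟨N, rfl⟩ : ∃ M, N = M + 1 := ⟨N - 1, by have := l.pos; omega⟩
  have hmp := (measurePreserving_piFinSuccAbove (fun _ : Fin (N + 1) => gaussianReal 0 1) l).symm
  have hint := (isCenteredGaussian_gaussPi _).integrable_mul_eval l h.continuous hK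
  have hint' : Integrable (φ' l) (gaussPi (N + 1)) :=
    .of_bound hφ'.aestronglyMeasurable K' (ae_of_all _ hK')
  unfold gaussPi at hint hint' ⊢
  rw [← hmp.integral_comp', ← hmp.integral_comp', integral_prod_symm, integral_prod_symm]
  rotate_left
  · exact hmp.integrable_comp_of_integrable hint'
  · exact hmp.integrable_comp_of_integrable hint
  congr 1 with y
  have hcurve : ∀ x, HasDerivAt (fun x => (l.insertNth x y : Fin (N + 1) → ℝ))
      (Pi.single l 1) x := fun x => hasDerivAt_pi.2 fun k => by
    cases k using l.succAboveCases with
    | x => simpa using hasDerivAt_id' x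
    | p i => simpa [Fin.succAbove_ne] using hasDerivAt_const x (y i)
  have hderiv : ∀ x, HasDerivAt (fun x => φ (l.insertNth x y)) (φ' l (l.insertNth x y)) x :=
    fun x => by simpa [Pi.single_apply] using h.hasDerivAt_comp (hcurve x)
  have hcont : Continuous fun x : ℝ => (l.insertNth x y : Fin (N + 1) → ℝ) :=
    continuous_iff_continuousAt.2 fun x => (hcurve x).continuousAt
  have hstein := integral_sub_mul_gaussianReal 0 1 hderiv (hφ'.comp hcont) (fun x => hK _)
    fun x => hK' _
  have hsymm : ∀ x, (MeasurableEquiv.piFinSuccAbove (fun _ => ℝ) l).symm (x, y) =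
    l.insertNth x y := fun x => rfl
  simpa [hsymm] using hstein

variable {ι : Type*} [Fintype ι] {S : Matrix ι ι ℝ} {μ : Measure (ι → ℝ)}

lemma integral_apply_mul_comp_vecMul_gaussPi {N : ℕ} (V : Matrix (Fin N) ι ℝ) (l : Fin N)
    {φ : (ι → ℝ) → ℝ} {φ' : ι → (ι → ℝ) → ℝ} (h : HasPartials φ φ')
    (hφ' : ∀ k, Continuous (φ' k)) {K K' : ℝ} (hK : ∀ y, |φ y| ≤ K)
    (hK' : ∀ k y, |φ' k y| ≤ K') :
    ∫ ξ, ξ l * φ (ξ ᵥ* V) ∂(gaussPi N) = ∑ k, V l k * ∫ ξ, φ' k (ξ ᵥ* V) ∂(gaussPi N) := by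
  have hV := continuous_vecMul V
  have hint' : ∀ k, Integrable (fun ξ => φ' k (ξ ᵥ* V)) (gaussPi N) := fun k =>
    .of_bound ((hφ' k).comp hV).aestronglyMeasurable K' (ae_of_all _ fun ξ => hK' k _)
  have hbound : ∀ ξ, |∑ k, V l k * φ' k (ξ ᵥ* V)| ≤ ∑ k, |V l k| * K' := fun ξ =>
    (Finset.abs_sum_le_sum_abs _ _).trans <| Finset.sum_le_sum fun k _ => by
      rw [abs_mul]
      exact mul_le_mul_of_nonneg_left (hK' k _) (abs_nonneg _)
  rw [integral_apply_mul_gaussPi l (h.comp_vecMul V) (by fun_prop) (fun ξ => hK _) hbound,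
    integral_finsetSum _ fun k _ => (hint' k).const_mul _]
  simp only [integral_const_mul]

lemma IsCenteredGaussian.integral_apply_mul (hμ : IsCenteredGaussian S μ) (j : ι)
    {φ : (ι → ℝ) → ℝ} {φ' : ι → (ι → ℝ) → ℝ} (h : HasPartials φ φ')
    (hφ' : ∀ k, Continuous (φ' k)) {K K' : ℝ} (hK : ∀ y, |φ y| ≤ K)
    (hK' : ∀ k y, |φ' k y| ≤ K') :
    ∫ y, y j * φ y ∂μ = ∑ k, S j k * ∫ y, φ' k y ∂μ := by
  obtain ⟨N, V, rfl, rfl⟩ := hμ.exists_eq_map_gaussPi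
  have hV := continuous_vecMul V
  have hφj : Continuous fun y : ι → ℝ => y j * φ y := (continuous_apply j).mul h.continuous
  have hint : ∀ l, Integrable (fun ξ => V l j * (ξ l * φ (ξ ᵥ* V))) (gaussPi N) := fun l =>
    ((isCenteredGaussian_gaussPi N).integrable_mul_eval l (h.continuous.comp hV)
      fun ξ => hK _).const_mul _
  calc ∫ y, y j * φ y ∂((gaussPi N).map (· ᵥ* V))
      = ∫ ξ, ∑ l, V l j * (ξ l * φ (ξ ᵥ* V)) ∂(gaussPi N) := by
        rw [integral_map hV.aemeasurable hφj.aestronglyMeasurable]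
        congr 1 with ξ
        rw [Matrix.vecMul, dotProduct, Finset.sum_mul]
        exact Finset.sum_congr rfl fun l _ => by ring
    _ = ∑ l, V l j * ∑ k, V l k * ∫ ξ, φ' k (ξ ᵥ* V) ∂(gaussPi N) := by
        rw [integral_finsetSum _ fun l _ => hint l]
        simp only [integral_const_mul,
          integral_apply_mul_comp_vecMul_gaussPi V _ h hφ' hK hK']
    _ = ∑ k, (Vᵀ * V : Matrix ι ι ℝ) j k * ∫ y, φ' k y ∂((gaussPi N).map (· ᵥ* V)) := by
        simp only [integral_map hV.aemeasurable (hφ' _).aestronglyMeasurable, Matrix.mul_apply,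
          Matrix.transpose_apply, Finset.mul_sum, Finset.sum_mul, mul_assoc]
        exact Finset.sum_comm

end Stein

/-! ### Slepian interpolation -/

section Slepian

variable {ι : Type*}

/-- The rotation `sin θ • x₁ + cos θ • x₂`, which interpolates between two independent vectors `x₂`
(at `θ = 0`) and `x₁` (at `θ = π / 2`). Its derivative in `θ` is `rotate (θ + π / 2)`. -/
def rotate (θ : ℝ) (x : (ι → ℝ) × (ι → ℝ)) : ι → ℝ := Real.sin θ • x.1 + Real.cos θ • x.2

lemma continuous_rotate (θ : ℝ) : Continuous (rotate θ : (ι → ℝ) × (ι → ℝ) → ι → ℝ) := by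
  unfold rotate; fun_prop

lemma rotate_add_pi_div_two_apply (θ : ℝ) (x : (ι → ℝ) × (ι → ℝ)) (j : ι) :
    rotate (θ + Real.pi / 2) x j = Real.cos θ * x.1 j - Real.sin θ * x.2 j := by
  simp [rotate, Real.sin_add_pi_div_two, Real.cos_add_pi_div_two, sub_eq_add_neg]

lemma abs_rotate_apply_le (θ : ℝ) (x : (ι → ℝ) × (ι → ℝ)) (j : ι) :
    |rotate θ x j| ≤ |x.1 j| + |x.2 j| := by
  refine (abs_add_le _ _).trans (add_le_add ?_ ?_) <;>
    simp only [Pi.smul_apply, smul_eq_mul, abs_mul]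
  · exact mul_le_of_le_one_left (abs_nonneg _) (Real.abs_sin_le_one θ)
  · exact mul_le_of_le_one_left (abs_nonneg _) (Real.abs_cos_le_one θ)

lemma hasDerivAt_rotate [Finite ι] (θ : ℝ) (x : (ι → ℝ) × (ι → ℝ)) :
    HasDerivAt (fun θ => rotate θ x) (rotate (θ + Real.pi / 2) x) θ := by
  cases nonempty_fintype ι
  refine (((Real.hasDerivAt_sin θ).smul_const x.1).add
    ((Real.hasDerivAt_cos θ).smul_const x.2)).congr_deriv ?_
  rw [rotate, Real.sin_add_pi_div_two, Real.cos_add_pi_div_two]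

variable [Fintype ι] {S T : Matrix ι ι ℝ} {μ ν : Measure (ι → ℝ)}

lemma hasDerivAt_integral_comp_rotate (hμ : IsCenteredGaussian S μ) (hν : IsCenteredGaussian T ν)
    {h : (ι → ℝ) → ℝ} {h₁ : ι → (ι → ℝ) → ℝ} (hh : HasPartials h h₁)
    (hc : ∀ j, Continuous (h₁ j)) {K : ℝ} (hK : ∀ y, |h y| ≤ K) (hK₁ : ∀ j y, |h₁ j y| ≤ K)
    (θ : ℝ) :
    HasDerivAt (fun θ => ∫ x, h (rotate θ x) ∂(μ.prod ν))
      (∫ x, ∑ j, h₁ j (rotate θ x) * rotate (θ + Real.pi / 2) x j ∂(μ.prod ν)) θ := by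
  have := hμ.isProbabilityMeasure
  have := hν.isProbabilityMeasure
  have hmeas : ∀ θ, AEStronglyMeasurable (fun x => h (rotate θ x)) (μ.prod ν) := fun θ =>
    (hh.continuous.comp (continuous_rotate θ)).aestronglyMeasurable
  have hmeas' : Continuous fun x => ∑ j, h₁ j (rotate θ x) * rotate (θ + Real.pi / 2) x j :=
    continuous_finsetSum _ fun j _ => ((hc j).comp (continuous_rotate θ)).mul
      ((continuous_apply j).comp (continuous_rotate _))
  have hbound : ∀ (x : (ι → ℝ) × (ι → ℝ)) (θ : ℝ),
      ‖∑ j, h₁ j (rotate θ x) * rotate (θ + Real.pi / 2) x j‖ ≤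
        ∑ j, K * (|x.1 j| + |x.2 j|) := fun x θ =>
    (norm_sum_le _ _).trans <| Finset.sum_le_sum fun j _ => by
      rw [norm_mul]
      exact mul_le_mul (hK₁ j _) (abs_rotate_apply_le _ x j) (norm_nonneg _)
        ((abs_nonneg _).trans (hK 0))
  have hint : Integrable (fun x => ∑ j, K * (|x.1 j| + |x.2 j|)) (μ.prod ν) :=
    integrable_finsetSum _ fun j _ => (((hμ.integrable_eval j).abs.comp_fst ν).add
      ((hν.integrable_eval j).abs.comp_snd μ)).const_mul K
  exact (hasDerivAt_integral_of_dominated_loc_of_deriv_le univ_mem (.of_forall hmeas)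
    (.of_bound (hmeas θ) K (ae_of_all _ fun x => hK _)) hmeas'.aestronglyMeasurable
    (ae_of_all _ fun x θ _ => hbound x θ) hint
    (ae_of_all _ fun x θ _ => hh.hasDerivAt_comp (hasDerivAt_rotate θ x))).2

lemma IsCenteredGaussian.integral_fst_apply_mul (hμ : IsCenteredGaussian S μ)
    [IsProbabilityMeasure ν] (j : ι) (c d : ℝ) {φ : (ι → ℝ) → ℝ} {φ' : ι → (ι → ℝ) → ℝ}
    (h : HasPartials φ φ') (hφ' : ∀ k, Continuous (φ' k)) {K : ℝ} (hK : ∀ y, |φ y| ≤ K)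
    (hK' : ∀ k y, |φ' k y| ≤ K) :
    ∫ x, x.1 j * φ (c • x.1 + d • x.2) ∂(μ.prod ν) =
      ∑ k, c * S j k * ∫ x, φ' k (c • x.1 + d • x.2) ∂(μ.prod ν) := by
  have := hμ.isProbabilityMeasure
  have hadd : Continuous fun x : (ι → ℝ) × (ι → ℝ) => c • x.1 + d • x.2 := by fun_prop
  have hint : Integrable (fun x => x.1 j * φ (c • x.1 + d • x.2)) (μ.prod ν) :=
    ((hμ.integrable_eval j).comp_fst ν).mul_bdd (h.continuous.comp hadd).aestronglyMeasurable
      (ae_of_all _ fun x => hK _)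
  have hint' : ∀ k, Integrable (fun x => φ' k (c • x.1 + d • x.2)) (μ.prod ν) := fun k =>
    .of_bound ((hφ' k).comp hadd).aestronglyMeasurable K (ae_of_all _ fun x => hK' k _)
  have hstein : ∀ y : ι → ℝ, ∫ x, x j * φ (c • x + d • y) ∂μ =
      ∑ k, S j k * ∫ x, c * φ' k (c • x + d • y) ∂μ := fun y =>
    hμ.integral_apply_mul j (h.comp_smul_add c (d • y)) (by fun_prop) (fun x => hK _)
      (K' := |c| * K) fun k x => by
        rw [abs_mul]
        exact mul_le_mul_of_nonneg_left (hK' k _) (abs_nonneg c)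
  simp only [integral_prod_symm _ hint, integral_prod_symm _ (hint' _), hstein,
    integral_const_mul]
  rw [integral_finsetSum _ fun k _ => ((hint' k).integral_prod_right.const_mul c).const_mul (S j k)]
  simp only [integral_const_mul]
  exact Finset.sum_congr rfl fun k _ => by ring

lemma integral_mul_rotate_add_pi_div_two (hμ : IsCenteredGaussian S μ)
    (hν : IsCenteredGaussian T ν) (j : ι) {φ : (ι → ℝ) → ℝ} {φ' : ι → (ι → ℝ) → ℝ}
    (h : HasPartials φ φ') (hφ' : ∀ k, Continuous (φ' k)) {K : ℝ} (hK : ∀ y, |φ y| ≤ K)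
    (hK' : ∀ k y, |φ' k y| ≤ K) (θ : ℝ) :
    ∫ x, φ (rotate θ x) * rotate (θ + Real.pi / 2) x j ∂(μ.prod ν) =
      ∑ k, Real.sin θ * Real.cos θ * (S j k - T j k) * ∫ x, φ' k (rotate θ x) ∂(μ.prod ν) := by
  have := hμ.isProbabilityMeasure
  have := hν.isProbabilityMeasure
  have hmeas := (h.continuous.comp (continuous_rotate θ)).aestronglyMeasurable (μ := μ.prod ν)
  have hfst : Integrable (fun x => x.1 j * φ (rotate θ x)) (μ.prod ν) :=
    ((hμ.integrable_eval j).comp_fst ν).mul_bdd hmeas (ae_of_all _ fun x => hK _)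
  have hsnd : Integrable (fun x => x.2 j * φ (rotate θ x)) (μ.prod ν) :=
    ((hν.integrable_eval j).comp_snd μ).mul_bdd hmeas (ae_of_all _ fun x => hK _)
  have hstein₁ : ∫ x, x.1 j * φ (rotate θ x) ∂(μ.prod ν) =
      ∑ k, Real.sin θ * S j k * ∫ x, φ' k (rotate θ x) ∂(μ.prod ν) :=
    hμ.integral_fst_apply_mul j _ _ h hφ' hK hK'
  have hswap : ∀ f : (ι → ℝ) × (ι → ℝ) → ℝ,
    ∫ x, f x ∂(ν.prod μ) = ∫ x, f x.swap ∂(μ.prod ν) := fun f => (integral_prod_swap f).symm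
  have hrotate : ∀ x : (ι → ℝ) × (ι → ℝ), Real.cos θ • x.2 + Real.sin θ • x.1 = rotate θ x :=
    fun x => add_comm _ _
  have hstein₂ : ∫ x, x.2 j * φ (rotate θ x) ∂(μ.prod ν) =
      ∑ k, Real.cos θ * T j k * ∫ x, φ' k (rotate θ x) ∂(μ.prod ν) := by
    simpa only [hswap, Prod.fst_swap, Prod.snd_swap, hrotate] using
      hν.integral_fst_apply_mul (ν := μ) j (Real.cos θ) (Real.sin θ) h hφ' hK hK'
  calc ∫ x, φ (rotate θ x) * rotate (θ + Real.pi / 2) x j ∂(μ.prod ν)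
      = ∫ x, (Real.cos θ * (x.1 j * φ (rotate θ x)) -
          Real.sin θ * (x.2 j * φ (rotate θ x))) ∂(μ.prod ν) := by
        congr 1 with x
        rw [rotate_add_pi_div_two_apply]
        ring
    _ = _ := by
        rw [integral_sub (hfst.const_mul _) (hsnd.const_mul _), integral_const_mul,
          integral_const_mul, hstein₁, hstein₂, Finset.mul_sum, Finset.mul_sum,
          ← Finset.sum_sub_distrib]
        exact Finset.sum_congr rfl fun k _ => by ring

lemma sum_sum_integral_abs_le {Ω : Type*} [MeasurableSpace Ω] {ρ : Measure Ω}
    [IsProbabilityMeasure ρ] {f : ι → ι → Ω → ℝ} (hf : ∀ j k, Integrable (f j k) ρ) {H : ℝ}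
    (hH : ∀ x, ∑ j, ∑ k, |f j k x| ≤ H) : ∑ j, ∑ k, ∫ x, |f j k x| ∂ρ ≤ H := by
  have hsum : ∀ j, Integrable (fun x => ∑ k, |f j k x|) ρ := fun j =>
    integrable_finsetSum _ fun k _ => (hf j k).abs
  calc ∑ j, ∑ k, ∫ x, |f j k x| ∂ρ = ∫ x, ∑ j, ∑ k, |f j k x| ∂ρ := by
        rw [integral_finsetSum _ fun j _ => hsum j]
        simp only [integral_finsetSum _ fun k _ => (hf _ k).abs]
    _ ≤ ∫ _, H ∂ρ := integral_mono (integrable_finsetSum _ fun j _ => hsum j)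
        (integrable_const H) hH
    _ = H := by rw [integral_const, probReal_univ, one_smul]

lemma abs_deriv_interpolation_le (hμ : IsCenteredGaussian S μ) (hν : IsCenteredGaussian T ν)
    {Δ : ℝ} (hΔ₀ : 0 ≤ Δ) (hΔ : ∀ j k, |S j k - T j k| ≤ Δ) {h₁ : ι → (ι → ℝ) → ℝ}
    {h₂ : ι → ι → (ι → ℝ) → ℝ} (hh : ∀ j, HasPartials (h₁ j) (h₂ j))
    (hc : ∀ j k, Continuous (h₂ j k)) {K H : ℝ} (hK₁ : ∀ j y, |h₁ j y| ≤ K)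
    (hK₂ : ∀ j k y, |h₂ j k y| ≤ K) (hH : ∀ y, ∑ j, ∑ k, |h₂ j k y| ≤ H) (θ : ℝ) :
    |∫ x, ∑ j, h₁ j (rotate θ x) * rotate (θ + Real.pi / 2) x j ∂(μ.prod ν)| ≤ Δ * H / 2 := by
  have := hμ.isProbabilityMeasure
  have := hν.isProbabilityMeasure
  have hint : ∀ j, Integrable (fun x => h₁ j (rotate θ x) * rotate (θ + Real.pi / 2) x j)
      (μ.prod ν) := fun j => by
    refine Integrable.bdd_mul ?_ ((hh j).continuous.comp
      (continuous_rotate θ)).aestronglyMeasurable (ae_of_all _ fun x => hK₁ j _)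
    simp only [rotate_add_pi_div_two_apply]
    exact (((hμ.integrable_eval j).comp_fst ν).const_mul _).sub
      (((hν.integrable_eval j).comp_snd μ).const_mul _)
  have hint₂ : ∀ j k, Integrable (fun x => h₂ j k (rotate θ x)) (μ.prod ν) := fun j k =>
    .of_bound ((hc j k).comp (continuous_rotate θ)).aestronglyMeasurable K
      (ae_of_all _ fun x => hK₂ j k _)
  have hsc : |Real.sin θ * Real.cos θ| ≤ 1 / 2 := by
    rw [show Real.sin θ * Real.cos θ = Real.sin (2 * θ) / 2 by rw [Real.sin_two_mul]; ring,
      abs_div, abs_two]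
    exact div_le_div_of_nonneg_right (Real.abs_sin_le_one _) two_pos.le
  have hterm : ∀ j k, |Real.sin θ * Real.cos θ * (S j k - T j k) *
      ∫ x, h₂ j k (rotate θ x) ∂(μ.prod ν)| ≤
        1 / 2 * Δ * ∫ x, |h₂ j k (rotate θ x)| ∂(μ.prod ν) := fun j k => by
    rw [abs_mul, abs_mul]
    gcongr
    · exact hΔ j k
    · exact abs_integral_le_integral_abs
  rw [integral_finsetSum _ fun j _ => hint j]
  simp only [integral_mul_rotate_add_pi_div_two hμ hν _ (hh _) (hc _) (hK₁ _) (hK₂ _)]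
  calc _ ≤ ∑ j, ∑ k, 1 / 2 * Δ * ∫ x, |h₂ j k (rotate θ x)| ∂(μ.prod ν) :=
        (Finset.abs_sum_le_sum_abs _ _).trans <| Finset.sum_le_sum fun j _ =>
          (Finset.abs_sum_le_sum_abs _ _).trans <| Finset.sum_le_sum fun k _ => hterm j k
    _ = 1 / 2 * Δ * ∑ j, ∑ k, ∫ x, |h₂ j k (rotate θ x)| ∂(μ.prod ν) := by
        simp only [Finset.mul_sum]
    _ ≤ 1 / 2 * Δ * H := by
        gcongr
        exact sum_sum_integral_abs_le hint₂ fun x => hH _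
    _ = Δ * H / 2 := by ring

lemma abs_integral_sub_integral_le [Nonempty ι] (hμ : IsCenteredGaussian S μ)
    (hν : IsCenteredGaussian T ν) {Δ : ℝ} (hΔ : ∀ j k, |S j k - T j k| ≤ Δ)
    {h : (ι → ℝ) → ℝ} {h₁ : ι → (ι → ℝ) → ℝ} {h₂ : ι → ι → (ι → ℝ) → ℝ} (hh : HasPartials h h₁)
    (hh₁ : ∀ j, HasPartials (h₁ j) (h₂ j)) (hc : ∀ j k, Continuous (h₂ j k)) {K H : ℝ}
    (hK : ∀ y, |h y| ≤ K) (hK₁ : ∀ j y, |h₁ j y| ≤ K) (hK₂ : ∀ j k y, |h₂ j k y| ≤ K)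
    (hH : ∀ y, ∑ j, ∑ k, |h₂ j k y| ≤ H) :
    |∫ y, h y ∂μ - ∫ y, h y ∂ν| ≤ Δ * H := by
  have := hμ.isProbabilityMeasure
  have := hν.isProbabilityMeasure
  obtain ⟨j⟩ := ‹Nonempty ι›
  have hΔ₀ : 0 ≤ Δ := (abs_nonneg _).trans (hΔ j j)
  have hH₀ : 0 ≤ H := (Finset.sum_nonneg fun j _ => Finset.sum_nonneg fun k _ =>
    abs_nonneg _).trans (hH 0)
  have hend : ∫ x, h (rotate (Real.pi / 2) x) ∂(μ.prod ν) = ∫ y, h y ∂μ := by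
    simp [rotate, integral_fun_fst]
  have hstart : ∫ x, h (rotate 0 x) ∂(μ.prod ν) = ∫ y, h y ∂ν := by
    simp [rotate, integral_fun_snd]
  have hmv := convex_univ.norm_image_sub_le_of_norm_hasDerivWithin_le (x := 0) (y := Real.pi / 2)
    (fun θ _ => (hasDerivAt_integral_comp_rotate hμ hν hh (fun j => (hh₁ j).continuous)
      hK hK₁ θ).hasDerivWithinAt)
    (fun θ _ => abs_deriv_interpolation_le hμ hν hΔ₀ hΔ hh₁ hc hK₁ hK₂ hH θ)
    (Set.mem_univ _) (Set.mem_univ _)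
  rw [hend, hstart, Real.norm_eq_abs, Real.norm_eq_abs, sub_zero,
    abs_of_pos Real.pi_div_two_pos] at hmv
  nlinarith [Real.pi_le_four, mul_nonneg hΔ₀ hH₀]

end Slepian

/-! ### The soft maximum -/

section SoftMax

variable {ι : Type*} [Fintype ι]

/-- The soft maximum of `y` at inverse temperature `β`; it exceeds `max y` by at most
`log (card ι) / β`. -/
def logSumExp (β : ℝ) (y : ι → ℝ) : ℝ := β⁻¹ * Real.log (∑ j, Real.exp (β * y j))

/-- The Gibbs weight of coordinate `j`, which is the `j`-th partial derivative of `logSumExp`. -/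
def gibbsWeight (β : ℝ) (j : ι) (y : ι → ℝ) : ℝ :=
  Real.exp (β * y j) / ∑ k, Real.exp (β * y k)

lemma gibbsWeight_nonneg (β : ℝ) (j : ι) (y : ι → ℝ) : 0 ≤ gibbsWeight β j y := by
  unfold gibbsWeight; positivity

lemma le_logSumExp {β : ℝ} (hβ : 0 < β) (j : ι) (y : ι → ℝ) : y j ≤ logSumExp β y := by
  rw [logSumExp, le_inv_mul_iff₀ hβ, ← Real.log_exp (β * y j)]
  exact Real.log_le_log (Real.exp_pos _) <| Finset.single_le_sum
    (f := fun k => Real.exp (β * y k)) (fun k _ => (Real.exp_pos _).le) (Finset.mem_univ j)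

lemma hasPartials_exp (β : ℝ) (j : ι) :
    HasPartials (fun y : ι → ℝ => Real.exp (β * y j))
      (fun k y => if k = j then β * Real.exp (β * y j) else 0) := by
  convert (hasPartials_apply j).comp (g := fun x => Real.exp (β * x))
    (g' := fun x => β * Real.exp (β * x)) fun y => ?_ using 3
  · simp
  · simpa [mul_comm] using ((hasDerivAt_id' (y j)).const_mul β).exp

lemma hasPartials_sum_exp (β : ℝ) :
    HasPartials (fun y : ι → ℝ => ∑ j, Real.exp (β * y j)) (fun k y => β * Real.exp (β * y k)) := by
  simpa using HasPartials.sum (Finset.univ : Finset ι) fun j => hasPartials_exp β j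

variable [Nonempty ι]

lemma sum_exp_pos (y : ι → ℝ) : 0 < ∑ j, Real.exp (y j) :=
  Finset.sum_pos (fun _ _ => Real.exp_pos _) Finset.univ_nonempty

lemma logSumExp_le {β : ℝ} (hβ : 0 < β) {y : ι → ℝ} {t : ℝ} (h : ∀ j, y j ≤ t) :
    logSumExp β y ≤ t + Real.log (Fintype.card ι) / β := by
  have hsum : ∑ k, Real.exp (β * y k) ≤ Fintype.card ι * Real.exp (β * t) := by
    refine (Finset.sum_le_card_nsmul _ _ (Real.exp (β * t)) fun k _ => ?_).trans (by simp)
    exact Real.exp_le_exp.2 (mul_le_mul_of_nonneg_left (h k) hβ.le)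
  have hlog := Real.log_le_log (sum_exp_pos fun k => β * y k) hsum
  rw [Real.log_mul (by positivity) (Real.exp_pos _).ne', Real.log_exp] at hlog
  rw [logSumExp, inv_mul_le_iff₀ hβ, mul_add, mul_div_cancel₀ _ hβ.ne']
  linarith

lemma sum_gibbsWeight (β : ℝ) (y : ι → ℝ) : ∑ j, gibbsWeight β j y = 1 := by
  simp only [gibbsWeight, ← Finset.sum_div, div_self (sum_exp_pos fun k => β * y k).ne']

lemma gibbsWeight_le_one (β : ℝ) (j : ι) (y : ι → ℝ) : gibbsWeight β j y ≤ 1 :=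
  (Finset.single_le_sum (fun k _ => gibbsWeight_nonneg β k y) (Finset.mem_univ j)).trans
    (sum_gibbsWeight β y).le

lemma abs_gibbsWeight_le_one (β : ℝ) (j : ι) (y : ι → ℝ) : |gibbsWeight β j y| ≤ 1 := by
  rw [abs_of_nonneg (gibbsWeight_nonneg β j y)]
  exact gibbsWeight_le_one β j y

lemma hasPartials_logSumExp {β : ℝ} (hβ : β ≠ 0) :
    HasPartials (logSumExp β : (ι → ℝ) → ℝ) (gibbsWeight β) := by
  have hlog : ∀ y : ι → ℝ, HasDerivAt (fun x => β⁻¹ * Real.log x)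
      (β⁻¹ * (∑ j, Real.exp (β * y j))⁻¹) (∑ j, Real.exp (β * y j)) := fun y =>
    (Real.hasDerivAt_log (sum_exp_pos fun j => β * y j).ne').const_mul _
  convert (hasPartials_sum_exp β).comp (g' := fun x => β⁻¹ * x⁻¹) hlog using 3
  · rw [logSumExp]
  · rw [gibbsWeight]
    field_simp

lemma hasPartials_gibbsWeight (β : ℝ) (j : ι) :
    HasPartials (gibbsWeight β j)
      (fun k y => β * gibbsWeight β j y * ((if k = j then 1 else 0) - gibbsWeight β k y)) := by
  convert (hasPartials_exp β j).mul ((hasPartials_sum_exp β).comp (g := fun x => x⁻¹)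
    (g' := fun x => -(x ^ 2)⁻¹) fun y => hasDerivAt_inv (sum_exp_pos _).ne') using 3 with y k y
  · rw [gibbsWeight, div_eq_mul_inv]
  · have := (sum_exp_pos fun k => β * y k).ne'
    simp only [gibbsWeight]
    split_ifs <;> field_simp <;> ring

lemma continuous_logSumExp {β : ℝ} (hβ : β ≠ 0) : Continuous (logSumExp β : (ι → ℝ) → ℝ) :=
  (hasPartials_logSumExp hβ).continuous

/-- The `k`-th partial derivative of `g (logSumExp β y) * gibbsWeight β j y`. When `g` is itself a
derivative, these are the entries of the Hessian of its antiderivative at the soft maximum. -/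
def gibbsPartial (β : ℝ) (g g' : ℝ → ℝ) (j k : ι) (y : ι → ℝ) : ℝ :=
  g' (logSumExp β y) * (gibbsWeight β j y * gibbsWeight β k y) +
    β * g (logSumExp β y) * gibbsWeight β j y * ((if k = j then 1 else 0) - gibbsWeight β k y)

lemma hasPartials_mul_gibbsWeight {β : ℝ} (hβ : β ≠ 0) {g g' : ℝ → ℝ}
    (hg : ∀ x, HasDerivAt g (g' x) x) (j : ι) :
    HasPartials (fun y => g (logSumExp β y) * gibbsWeight β j y) (gibbsPartial β g g' j) := by
  convert ((hasPartials_logSumExp hβ).comp fun y => hg _).mul (hasPartials_gibbsWeight β j)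
    using 3
  rw [gibbsPartial]
  ring

lemma continuous_gibbsPartial {β : ℝ} (hβ : β ≠ 0) {g g' : ℝ → ℝ} (hg : Continuous g)
    (hg' : Continuous g') (j k : ι) : Continuous (gibbsPartial β g g' j k) := by
  have hlse := continuous_logSumExp (ι := ι) hβ
  have hw := fun j => (hasPartials_gibbsWeight β j).continuous (ι := ι)
  unfold gibbsPartial
  fun_prop

lemma sum_sum_abs_gibbsPartial_le {β : ℝ} (hβ : 0 ≤ β) {g g' : ℝ → ℝ} {a b : ℝ}
    (ha : ∀ x, |g x| ≤ a) (hb : ∀ x, |g' x| ≤ b) (y : ι → ℝ) :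
    ∑ j, ∑ k, |gibbsPartial β g g' j k y| ≤ b + 2 * β * a := by
  set w := fun j => gibbsWeight β j y
  have hw₀ : ∀ j, 0 ≤ w j := fun j => gibbsWeight_nonneg β j y
  have hw₁ : ∑ j, w j = 1 := sum_gibbsWeight β y
  have hterm : ∀ j k, |gibbsPartial β g g' j k y| ≤
      b * (w j * w k) + β * a * w j * ((if k = j then 1 else 0) + w k) := fun j k => by
    refine (abs_add_le _ _).trans (add_le_add ?_ ?_)
    · rw [abs_mul, abs_of_nonneg (mul_nonneg (hw₀ j) (hw₀ k))]
      exact mul_le_mul_of_nonneg_right (hb _) (mul_nonneg (hw₀ j) (hw₀ k))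
    · rw [abs_mul, abs_mul, abs_mul, abs_of_nonneg hβ, abs_of_nonneg (hw₀ j)]
      have hdiff : |(if k = j then (1 : ℝ) else 0) - w k| ≤ (if k = j then 1 else 0) + w k := by
        refine (abs_sub _ _).trans_eq ?_
        rw [abs_of_nonneg (hw₀ k), abs_of_nonneg (by split_ifs <;> norm_num)]
      have := hw₀ j
      have := (abs_nonneg (g 0)).trans (ha 0)
      gcongr
      exact ha _
  calc ∑ j, ∑ k, |gibbsPartial β g g' j k y|
      ≤ ∑ j, ∑ k, (b * (w j * w k) + β * a * w j * ((if k = j then 1 else 0) + w k)) :=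
        Finset.sum_le_sum fun j _ => Finset.sum_le_sum fun k _ => hterm j k
    _ = ∑ j, (b + 2 * β * a) * w j := Finset.sum_congr rfl fun j _ => by
        simp only [Finset.sum_add_distrib, ← Finset.mul_sum, hw₁, Finset.sum_ite_eq',
          Finset.mem_univ, if_true]
        ring
    _ = b + 2 * β * a := by rw [← Finset.mul_sum, hw₁, mul_one]

lemma abs_gibbsPartial_le {β : ℝ} (hβ : 0 ≤ β) {g g' : ℝ → ℝ} {a b : ℝ} (ha : ∀ x, |g x| ≤ a)
    (hb : ∀ x, |g' x| ≤ b) (j k : ι) (y : ι → ℝ) :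
    |gibbsPartial β g g' j k y| ≤ b + 2 * β * a :=
  calc |gibbsPartial β g g' j k y| ≤ ∑ k, |gibbsPartial β g g' j k y| :=
        Finset.single_le_sum (f := fun k => |gibbsPartial β g g' j k y|)
          (fun _ _ => abs_nonneg _) (Finset.mem_univ k)
    _ ≤ ∑ j, ∑ k, |gibbsPartial β g g' j k y| :=
        Finset.single_le_sum (f := fun j => ∑ k, |gibbsPartial β g g' j k y|)
          (fun _ _ => Finset.sum_nonneg fun _ _ => abs_nonneg _) (Finset.mem_univ j)
    _ ≤ b + 2 * β * a := sum_sum_abs_gibbsPartial_le hβ ha hb y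

end SoftMax

/-! ### Anti-concentration of Gaussian maxima -/

section AntiConcentration

variable {ι : Type*} [Fintype ι] {S : Matrix ι ι ℝ} {μ : Measure (ι → ℝ)}

lemma two_mul_apply_le_of_posSemidef {ι : Type*} [Finite ι] {S : Matrix ι ι ℝ}
    (hS : S.PosSemidef) (j k : ι) : 2 * S j k ≤ S j j + S k k := by
  cases nonempty_fintype ι
  have h := hS.dotProduct_mulVec_nonneg (Pi.single j 1 - Pi.single k 1)
  have hsymm : S k j = S j k := hS.isHermitian.apply j k
  simp only [star_trivial, Matrix.mulVec_sub, sub_dotProduct, dotProduct_sub,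
    Matrix.mulVec_single_one, single_one_dotProduct, Matrix.col_apply] at h
  linarith

lemma sum_sum_mul_mul_apply_le (hS : S.PosSemidef) {w : ι → ℝ} (hw₀ : ∀ j, 0 ≤ w j)
    (hw₁ : ∑ j, w j = 1) : ∑ j, ∑ k, w j * w k * S j k ≤ ∑ j, w j * S j j := by
  have hterm : ∀ j k, w j * w k * S j k ≤
      1 / 2 * (w j * S j j * w k) + 1 / 2 * (w j * (w k * S k k)) := fun j k => by
    linarith [mul_le_mul_of_nonneg_left (two_mul_apply_le_of_posSemidef hS j k)
      (mul_nonneg (hw₀ j) (hw₀ k))]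
  refine (Finset.sum_le_sum fun j _ => Finset.sum_le_sum fun k _ => hterm j k).trans_eq ?_
  simp only [Finset.sum_add_distrib, ← Finset.mul_sum, ← Finset.sum_mul, hw₁]
  ring

/-- With `Q = ∑ wⱼ wₖ Sⱼₖ ≤ A = ∑ wⱼ Sⱼⱼ`, the sum on the right equals `g' Q + β g (A - Q)`. -/
lemma mul_le_sum_sum_mul_gibbsPartial [Nonempty ι] (hS : S.PosSemidef) {c : ℝ}
    (hc : ∀ j, c ≤ S j j) {β : ℝ} {g g' : ℝ → ℝ} (hg' : ∀ x, 0 ≤ g' x)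
    (hle : ∀ x, g' x ≤ β * g x) (y : ι → ℝ) :
    c * g' (logSumExp β y) ≤ ∑ j, ∑ k, S j k * gibbsPartial β g g' j k y := by
  set x := logSumExp β y
  set w := fun j => gibbsWeight β j y
  have hw₀ : ∀ j, 0 ≤ w j := fun j => gibbsWeight_nonneg β j y
  have hw₁ : ∑ j, w j = 1 := sum_gibbsWeight β y
  set Q := ∑ j, ∑ k, w j * w k * S j k
  set A := ∑ j, w j * S j j
  have hQA : Q ≤ A := sum_sum_mul_mul_apply_le hS hw₀ hw₁
  have hcA : c ≤ A := by
    calc c = ∑ j, w j * c := by rw [← Finset.sum_mul, hw₁, one_mul]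
      _ ≤ A := Finset.sum_le_sum fun j _ => mul_le_mul_of_nonneg_left (hc j) (hw₀ j)
  have hA : A = ∑ j, ∑ k, S j k * (w j * if k = j then 1 else 0) := by simp [A, mul_comm]
  have hsum : ∑ j, ∑ k, S j k * gibbsPartial β g g' j k y = g' x * Q + β * g x * (A - Q) := by
    simp only [hA, Q, ← Finset.sum_sub_distrib, Finset.mul_sum, ← Finset.sum_add_distrib]
    refine Finset.sum_congr rfl fun j _ => Finset.sum_congr rfl fun k _ => ?_
    rw [gibbsPartial]
    ring
  calc c * g' x ≤ A * g' x := mul_le_mul_of_nonneg_right hcA (hg' x)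
    _ = g' x * Q + g' x * (A - Q) := by ring
    _ ≤ g' x * Q + β * g x * (A - Q) := by
        have := sub_nonneg.2 hQA
        gcongr
        exact hle x
    _ = _ := hsum.symm

lemma norm_le_tangent_log [Nonempty ι] {a l : ℝ} (ha : 0 < a) (hl : 0 < l) (y : ι → ℝ) :
    ‖y‖ ≤ (Real.log a - 1 + (∑ j, (Real.exp (l * y j) + Real.exp (-l * y j))) / a) / l := by
  refine (pi_norm_le_iff_of_nonempty y).2 fun j => ?_
  have htangent := Real.log_le_sub_one_of_pos (div_pos (Real.exp_pos (l * |y j|)) ha)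
  rw [Real.log_div (Real.exp_pos _).ne' ha.ne', Real.log_exp] at htangent
  have hexp : Real.exp (l * |y j|) ≤ ∑ j, (Real.exp (l * y j) + Real.exp (-l * y j)) := by
    calc Real.exp (l * |y j|) = Real.exp |l * y j| := by rw [abs_mul, abs_of_pos hl]
      _ ≤ Real.exp (l * y j) + Real.exp (-l * y j) := by
          rw [neg_mul]; exact Real.exp_abs_le _
      _ ≤ _ := Finset.single_le_sum (f := fun j => Real.exp (l * y j) + Real.exp (-l * y j))
          (fun k _ => by positivity) (Finset.mem_univ j)
  rw [Real.norm_eq_abs, le_div_iff₀ hl]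
  linarith [div_le_div_of_nonneg_right hexp ha.le]

lemma sum_apply_mul_gibbsWeight_le [Nonempty ι] (β : ℝ) {a : ℝ} (ha : 0 ≤ a) (y : ι → ℝ) :
    ∑ j, y j * (a * gibbsWeight β j y) ≤ a * ‖y‖ := by
  calc ∑ j, y j * (a * gibbsWeight β j y) ≤ ∑ j, ‖y‖ * (a * gibbsWeight β j y) :=
        Finset.sum_le_sum fun j _ => mul_le_mul_of_nonneg_right
          ((le_abs_self _).trans (norm_le_pi_norm y j)) (mul_nonneg ha (gibbsWeight_nonneg β j y))
    _ = a * ‖y‖ := by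
        rw [← Finset.mul_sum, ← Finset.mul_sum, sum_gibbsWeight, mul_one, mul_comm]

namespace IsCenteredGaussian

lemma integrable_norm (hμ : IsCenteredGaussian S μ) : Integrable (fun y => ‖y‖) μ :=
  (Integrable.of_eval (f := id) hμ.integrable_eval).norm

lemma integral_norm_le [Nonempty ι] (hμ : IsCenteredGaussian S μ) {C : ℝ} (hC : ∀ j, S j j ≤ C)
    {l : ℝ} (hl : 0 < l) :
    ∫ y, ‖y‖ ∂μ ≤ (Real.log (2 * Fintype.card ι) + C * l ^ 2 / 2) / l := by
  have := hμ.isProbabilityMeasure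
  set a := 2 * Fintype.card ι * Real.exp (C * l ^ 2 / 2)
  have ha : 0 < a := by positivity
  have hint : ∀ j, Integrable (fun y => Real.exp (l * y j) + Real.exp (-l * y j)) μ := fun j =>
    (hμ.integrable_exp_mul_eval j l).add (hμ.integrable_exp_mul_eval j (-l))
  have hsum : Integrable (fun y => ∑ j, (Real.exp (l * y j) + Real.exp (-l * y j))) μ :=
    integrable_finsetSum _ fun j _ => hint j
  have hmgf : ∫ y, ∑ j, (Real.exp (l * y j) + Real.exp (-l * y j)) ∂μ ≤ a := by
    rw [integral_finsetSum _ fun j _ => hint j]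
    calc _ ≤ ∑ _ : ι, 2 * Real.exp (C * l ^ 2 / 2) := Finset.sum_le_sum fun j _ => by
          rw [integral_add (hμ.integrable_exp_mul_eval j l) (hμ.integrable_exp_mul_eval j (-l)),
            hμ.integral_exp_mul_eval, hμ.integral_exp_mul_eval, neg_sq, ← two_mul]
          gcongr
          exact hC j
      _ = a := by
          rw [Finset.sum_const, Finset.card_univ, nsmul_eq_mul]
          ring
  calc ∫ y, ‖y‖ ∂μ
      ≤ ∫ y, (Real.log a - 1 + (∑ j, (Real.exp (l * y j) + Real.exp (-l * y j))) / a) / l ∂μ :=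
        integral_mono hμ.integrable_norm (((integrable_const _).add (hsum.div_const a)).div_const l)
          fun y => norm_le_tangent_log ha hl y
    _ = (Real.log a - 1 + (∫ y, ∑ j, (Real.exp (l * y j) + Real.exp (-l * y j)) ∂μ) / a) / l := by
        rw [integral_div, integral_add (integrable_const _) (hsum.div_const a), integral_div,
          integral_const, probReal_univ, one_smul]
    _ ≤ Real.log a / l := by
        gcongr
        linarith [(div_le_one ha).2 hmgf]
    _ = _ := by rw [Real.log_mul (by positivity) (Real.exp_pos _).ne', Real.log_exp]

lemma mul_integral_comp_logSumExp_le [Nonempty ι] (hμ : IsCenteredGaussian S μ) {c : ℝ}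
    (hc : ∀ j, c ≤ S j j) {β : ℝ} (hβ : 0 < β) {g g' : ℝ → ℝ} (hg : ∀ x, HasDerivAt g (g' x) x)
    (hg'c : Continuous g') (hg' : ∀ x, 0 ≤ g' x) (hle : ∀ x, g' x ≤ β * g x) {M : ℝ}
    (hM : ∀ x, g x ≤ M) :
    c * ∫ y, g' (logSumExp β y) ∂μ ≤ M * ∫ y, ‖y‖ ∂μ := by
  have := hμ.isProbabilityMeasure
  have hg₀ : ∀ x, 0 ≤ g x := fun x => nonneg_of_mul_nonneg_right ((hg' x).trans (hle x)) hβ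
  have ha : ∀ x, |g x| ≤ M := fun x => by rw [abs_of_nonneg (hg₀ x)]; exact hM x
  have hb : ∀ x, |g' x| ≤ β * M := fun x => by
    rw [abs_of_nonneg (hg' x)]
    exact (hle x).trans (mul_le_mul_of_nonneg_left (hM x) hβ.le)
  have hgc : Continuous g := continuous_iff_continuousAt.2 fun x => (hg x).continuousAt
  have hlse := continuous_logSumExp (ι := ι) hβ.ne'
  set φ : ι → (ι → ℝ) → ℝ := fun j y => g (logSumExp β y) * gibbsWeight β j y
  have hφ : ∀ j, HasPartials (φ j) (gibbsPartial β g g' j) := hasPartials_mul_gibbsWeight hβ.ne' hg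
  have hφK : ∀ j y, |φ j y| ≤ M := fun j y => by
    rw [abs_mul]
    exact (mul_le_of_le_one_right (abs_nonneg _) (abs_gibbsWeight_le_one β j y)).trans (ha _)
  have hint := fun j => hμ.integrable_mul_eval j (hφ j).continuous (hφK j)
  have hint' : ∀ j k, Integrable (fun y => S j k * gibbsPartial β g g' j k y) μ := fun j k =>
    (Integrable.of_bound (continuous_gibbsPartial hβ.ne' hgc hg'c j k).aestronglyMeasurable _
      (ae_of_all _ (abs_gibbsPartial_le hβ.le ha hb j k))).const_mul _
  have hint'' := fun j => integrable_finsetSum Finset.univ fun k _ => hint' j k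
  calc c * ∫ y, g' (logSumExp β y) ∂μ
      ≤ ∫ y, ∑ j, ∑ k, S j k * gibbsPartial β g g' j k y ∂μ := by
        rw [← integral_const_mul]
        exact integral_mono ((Integrable.of_bound (hg'c.comp hlse).aestronglyMeasurable _
          (ae_of_all _ fun y => hb _)).const_mul c) (integrable_finsetSum _ fun j _ => hint'' j)
          (mul_le_sum_sum_mul_gibbsPartial hμ.posSemidef hc hg' hle)
    _ = ∫ y, ∑ j, y j * φ j y ∂μ := by
        rw [integral_finsetSum _ fun j _ => hint j, integral_finsetSum _ fun j _ => hint'' j]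
        refine Finset.sum_congr rfl fun j _ => ?_
        rw [integral_finsetSum _ fun k _ => hint' j k, hμ.integral_apply_mul j (hφ j)
          (continuous_gibbsPartial hβ.ne' hgc hg'c j) (hφK j) (abs_gibbsPartial_le hβ.le ha hb j)]
        simp only [integral_const_mul]
    _ ≤ ∫ y, M * ‖y‖ ∂μ :=
        integral_mono (integrable_finsetSum _ fun j _ => hint j) (hμ.integrable_norm.const_mul M)
          fun y => (sum_apply_mul_gibbsWeight_le β (hg₀ _) y).trans
            (mul_le_mul_of_nonneg_right (hM _) (norm_nonneg y))
    _ = M * ∫ y, ‖y‖ ∂μ := integral_const_mul _ _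

end IsCenteredGaussian

lemma one_div_twenty_le_deriv_sigmoid {x : ℝ} (hx : |x| ≤ 2) :
    1 / 20 ≤ Real.sigmoid x * (1 - Real.sigmoid x) := by
  have hexp₂ : Real.exp 2 ≤ 8 := by
    have := Real.exp_one_lt_d9
    rw [show (2 : ℝ) = 1 + 1 by norm_num, Real.exp_add]
    nlinarith [Real.exp_pos 1]
  obtain ⟨hx₁, hx₂⟩ := abs_le.1 hx
  have hexp : Real.exp x ≤ 8 := (Real.exp_le_exp.2 hx₂).trans hexp₂
  have hexp_neg : Real.exp (-x) ≤ 8 := (Real.exp_le_exp.2 (by linarith)).trans hexp₂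
  have hmul : Real.exp (-x) * Real.exp x = 1 := by rw [← Real.exp_add]; simp
  rw [← Real.sigmoid_neg, Real.sigmoid_def, Real.sigmoid_def, neg_neg, ← mul_inv, one_div]
  apply inv_anti₀ (by positivity)
  nlinarith [Real.exp_pos x, Real.exp_pos (-x)]

lemma hasDerivAt_mul_sigmoid {ε : ℝ} (hε : ε ≠ 0) (t x : ℝ) :
    HasDerivAt (fun x => ε * Real.sigmoid ((x - t) / ε))
      (Real.sigmoid ((x - t) / ε) * (1 - Real.sigmoid ((x - t) / ε))) x := by
  have hlin : HasDerivAt (fun x => (x - t) / ε) (1 / ε) x :=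
    ((hasDerivAt_id' x).sub_const t).div_const ε
  refine (((Real.hasDerivAt_sigmoid _).comp x hlin).const_mul ε).congr_deriv ?_
  field_simp

lemma measurableSet_forall_apply_le {ι : Type*} [Countable ι] (t : ℝ) :
    MeasurableSet {y : ι → ℝ | ∀ j, y j ≤ t} := by
  rw [Set.ofPred_forall]
  exact MeasurableSet.iInter fun j => measurableSet_le (measurable_pi_apply j) measurable_const

/-- The soft maximum stays within `3ε / 2` of `s + 3ε / 2` on the event, and there the derivative of
the sigmoid of width `ε` is at least `1 / 20`. -/
lemma IsCenteredGaussian.measureReal_le_integral_deriv_sigmoid [Nontrivial ι]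
    (hμ : IsCenteredGaussian S μ) {ε : ℝ} (hε : 0 < ε) (s : ℝ) :
    1 / 20 * μ.real {y | (∀ j, y j ≤ s + 2 * ε) ∧ ¬ ∀ j, y j ≤ s} ≤
      ∫ y, Real.sigmoid ((logSumExp (2 * Real.log (Fintype.card ι) / ε) y - (s + 3 / 2 * ε)) / ε) *
        (1 - Real.sigmoid ((logSumExp (2 * Real.log (Fintype.card ι) / ε) y -
          (s + 3 / 2 * ε)) / ε)) ∂μ := by
  have := hμ.isProbabilityMeasure
  have hlog : 0 < Real.log (Fintype.card ι) := Real.log_pos (by exact_mod_cast Fintype.one_lt_card)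
  set β := 2 * Real.log (Fintype.card ι) / ε with hβdef
  have hβ : 0 < β := by positivity
  set E := {y : ι → ℝ | (∀ j, y j ≤ s + 2 * ε) ∧ ¬ ∀ j, y j ≤ s}
  have hE : MeasurableSet E :=
    (measurableSet_forall_apply_le _).inter (measurableSet_forall_apply_le _).compl
  set x := fun y : ι → ℝ => (logSumExp β y - (s + 3 / 2 * ε)) / ε
  have hx : Continuous x := ((continuous_logSumExp hβ.ne').sub continuous_const).div_const ε
  have hmeas : Continuous fun y => Real.sigmoid (x y) * (1 - Real.sigmoid (x y)) := by fun_prop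
  have hnonneg : ∀ x, 0 ≤ Real.sigmoid x * (1 - Real.sigmoid x) := fun x =>
    mul_nonneg (Real.sigmoid_nonneg x) (sub_nonneg.2 (Real.sigmoid_le_one x))
  rw [← integral_indicator_one hE, ← integral_const_mul]
  refine integral_mono (((integrable_const (1 : ℝ)).indicator hE).const_mul _)
    (.of_bound hmeas.aestronglyMeasurable 1 (ae_of_all _ fun y => ?_)) fun y => ?_
  · rw [Real.norm_of_nonneg (hnonneg _)]
    exact mul_le_one₀ (Real.sigmoid_le_one _) (sub_nonneg.2 (Real.sigmoid_le_one _))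
      (sub_le_self _ (Real.sigmoid_nonneg _))
  · by_cases hy : y ∈ E
    · simp only [Set.indicator_of_mem hy, Pi.one_apply, mul_one]
      obtain ⟨hupper, hlower⟩ := hy
      push Not at hlower
      obtain ⟨j, hj⟩ := hlower
      have hlse_le := logSumExp_le hβ hupper
      rw [show Real.log (Fintype.card ι) / β = ε / 2 by rw [hβdef]; field_simp] at hlse_le
      have hle_lse := le_logSumExp hβ j y
      refine one_div_twenty_le_deriv_sigmoid ?_
      rw [abs_div, abs_of_pos hε, div_le_iff₀ hε, abs_le]
      constructor <;> linarith
    · simp only [Set.indicator_of_notMem hy, mul_zero]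
      exact hnonneg _

lemma IsCenteredGaussian.measureReal_forall_le_and_not_le [Nontrivial ι]
    (hμ : IsCenteredGaussian S μ) {c C : ℝ} (hc₀ : 0 < c) (hc : ∀ j, c ≤ S j j)
    (hC : ∀ j, S j j ≤ C) {ε : ℝ} (hε : 0 < ε) (s : ℝ) :
    μ.real {y | (∀ j, y j ≤ s + 2 * ε) ∧ ¬ ∀ j, y j ≤ s} ≤
      20 / c * (2 + C / 2) * (ε * √(Real.log (Fintype.card ι))) := by
  have hlog₂ := Real.log_two_gt_d9
  have hcard : (2 : ℝ) ≤ Fintype.card ι := by exact_mod_cast Fintype.one_lt_card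
  set L := Real.log (Fintype.card ι)
  have hL₂ : Real.log 2 ≤ L := Real.log_le_log two_pos hcard
  have hL : 0 < L := by linarith
  have hnorm : ∫ y, ‖y‖ ∂μ ≤ (2 + C / 2) * √L := by
    refine (hμ.integral_norm_le hC (Real.sqrt_pos.2 hL)).trans ?_
    rw [Real.sq_sqrt hL.le, div_le_iff₀ (Real.sqrt_pos.2 hL), mul_assoc,
      Real.mul_self_sqrt hL.le, Real.log_mul two_ne_zero (by positivity)]
    linarith
  set E := {y : ι → ℝ | (∀ j, y j ≤ s + 2 * ε) ∧ ¬ ∀ j, y j ≤ s}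
  have hsigmoid : Continuous fun x => Real.sigmoid ((x - (s + 3 / 2 * ε)) / ε) :=
    _root_.continuous_sigmoid.comp (by fun_prop)
  have hcore := hμ.mul_integral_comp_logSumExp_le hc (β := 2 * L / ε) (by positivity)
    (hasDerivAt_mul_sigmoid hε.ne' (s + 3 / 2 * ε)) (hsigmoid.mul (continuous_const.sub hsigmoid))
    (fun x => mul_nonneg (Real.sigmoid_nonneg _) (sub_nonneg.2 (Real.sigmoid_le_one _)))
    (fun x => ?_) (M := ε) fun x => mul_le_of_le_one_right hε.le (Real.sigmoid_le_one _)
  · calc μ.real E = 20 / c * (c * (1 / 20 * μ.real E)) := by field_simp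
      _ ≤ 20 / c * (ε * ∫ y, ‖y‖ ∂μ) := by
          refine mul_le_mul_of_nonneg_left (le_trans ?_ hcore) (by positivity)
          exact mul_le_mul_of_nonneg_left (hμ.measureReal_le_integral_deriv_sigmoid hε s) hc₀.le
      _ ≤ 20 / c * (ε * ((2 + C / 2) * √L)) := by gcongr
      _ = 20 / c * (2 + C / 2) * (ε * √L) := by ring
  · rw [← mul_assoc, div_mul_cancel₀ _ hε.ne', mul_comm (2 * L)]
    exact mul_le_mul_of_nonneg_left (by linarith [Real.sigmoid_nonneg ((x - (s + 3 / 2 * ε)) / ε)])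
      (Real.sigmoid_nonneg _)

end AntiConcentration

/-! ### Comparison of Gaussian maxima -/

lemma hasCompactSupport_deriv_smoothTransition :
    HasCompactSupport (deriv Real.smoothTransition) := by
  refine .intro (isCompact_Icc (a := 0) (b := 1)) fun x hx => ?_
  rcases lt_or_ge x 0 with h | h
  · have heq : Real.smoothTransition =ᶠ[𝓝 x] fun _ => 0 := by
      filter_upwards [Iio_mem_nhds h] with y hy using Real.smoothTransition.zero_of_nonpos hy.le
    rw [heq.deriv_eq, deriv_const]
  · have heq : Real.smoothTransition =ᶠ[𝓝 x] fun _ => 1 := by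
      filter_upwards [Ioi_mem_nhds (not_le.1 fun h₁ => hx ⟨h, h₁⟩)] with y hy
        using Real.smoothTransition.one_of_one_le (Set.mem_Ioi.1 hy).le
    rw [heq.deriv_eq, deriv_const]

lemma exists_smooth_cutoff : ∃ B : ℝ, 0 < B ∧ ∀ s ε : ℝ, 0 < ε → ∃ g g₁ g₂ : ℝ → ℝ,
    (∀ x, HasDerivAt g (g₁ x) x) ∧ (∀ x, HasDerivAt g₁ (g₂ x) x) ∧ Continuous g₂ ∧
    (∀ x, 0 ≤ g x) ∧ (∀ x, g x ≤ 1) ∧ (∀ x ≤ s, g x = 1) ∧ (∀ x, s + ε ≤ x → g x = 0) ∧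
    (∀ x, |g₁ x| ≤ B / ε) ∧ ∀ x, |g₂ x| ≤ B / ε ^ 2 := by
  set T := Real.smoothTransition
  have hT : ContDiff ℝ 2 T := Real.smoothTransition.contDiff
  have hT₁ : ContDiff ℝ 1 (deriv T) := (contDiff_succ_iff_deriv.1 hT).2.2
  have hT₂ : Continuous (deriv (deriv T)) := hT₁.continuous_deriv le_rfl
  have hsupp : HasCompactSupport (deriv T) := hasCompactSupport_deriv_smoothTransition
  obtain ⟨B₁, hB₁⟩ := hsupp.exists_bound_of_continuous hT₁.continuous
  obtain ⟨B₂, hB₂⟩ := hsupp.deriv.exists_bound_of_continuous hT₂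
  have hB₁₀ : 0 ≤ B₁ := (norm_nonneg _).trans (hB₁ 0)
  have hB₂₀ : 0 ≤ B₂ := (norm_nonneg _).trans (hB₂ 0)
  refine ⟨B₁ + B₂ + 1, by positivity, fun s ε hε => ?_⟩
  set z := fun x => (x - s) / ε
  have hz : ∀ x, HasDerivAt z (1 / ε) x := fun x => ((hasDerivAt_id' x).sub_const s).div_const ε
  refine ⟨fun x => 1 - T (z x), fun x => -(deriv T (z x) * (1 / ε)),
    fun x => -(deriv (deriv T) (z x) * (1 / ε) * (1 / ε)), fun x => ?_, fun x => ?_, ?_,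
    fun x => sub_nonneg.2 (Real.smoothTransition.le_one _),
    fun x => sub_le_self _ (Real.smoothTransition.nonneg _), fun x hx => ?_, fun x hx => ?_,
    fun x => ?_, fun x => ?_⟩
  · exact ((hT.differentiable two_ne_zero _).hasDerivAt.comp x (hz x)).const_sub 1
  · exact (((hT₁.differentiable one_ne_zero _).hasDerivAt.comp x (hz x)).mul_const _).neg
  · fun_prop
  · have hzx : z x ≤ 0 := div_nonpos_of_nonpos_of_nonneg (sub_nonpos.2 hx) hε.le
    exact sub_eq_self.2 (Real.smoothTransition.zero_of_nonpos hzx)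
  · have hzx : 1 ≤ z x := (one_le_div hε).2 (by linarith)
    exact sub_eq_zero.2 (Real.smoothTransition.one_of_one_le hzx).symm
  · rw [abs_neg, abs_mul, abs_of_pos (one_div_pos.2 hε), mul_one_div]
    gcongr
    linarith [hB₁ (z x), Real.norm_eq_abs (deriv T (z x))]
  · rw [abs_neg, mul_assoc, abs_mul, ← sq, div_pow, one_pow,
      abs_of_pos (one_div_pos.2 (pow_pos hε 2)), mul_one_div]
    gcongr
    linarith [hB₂ (z x), Real.norm_eq_abs (deriv (deriv T) (z x))]

section Comparison

variable {ι : Type*} [Fintype ι] {μ ν : Measure (ι → ℝ)}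

lemma IsCenteredGaussian.abs_integral_comp_logSumExp_sub_le [Nonempty ι]
    {S T : Matrix ι ι ℝ} (hμ : IsCenteredGaussian S μ) (hν : IsCenteredGaussian T ν) {Δ : ℝ}
    (hΔ : ∀ j k, |S j k - T j k| ≤ Δ) {β : ℝ} (hβ : 0 < β) {g g₁ g₂ : ℝ → ℝ}
    (hg : ∀ x, HasDerivAt g (g₁ x) x) (hg₁ : ∀ x, HasDerivAt g₁ (g₂ x) x) (hg₂ : Continuous g₂)
    {M a b : ℝ} (hM : ∀ x, |g x| ≤ M) (ha : ∀ x, |g₁ x| ≤ a) (hb : ∀ x, |g₂ x| ≤ b) :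
    |∫ y, g (logSumExp β y) ∂μ - ∫ y, g (logSumExp β y) ∂ν| ≤ Δ * (b + 2 * β * a) := by
  have hM₀ : 0 ≤ M := (abs_nonneg _).trans (hM 0)
  have ha₀ : 0 ≤ a := (abs_nonneg _).trans (ha 0)
  have hb₀ : 0 ≤ b := (abs_nonneg _).trans (hb 0)
  have hg₁c : Continuous g₁ := continuous_iff_continuousAt.2 fun x => (hg₁ x).continuousAt
  refine abs_integral_sub_integral_le hμ hν hΔ
    ((hasPartials_logSumExp hβ.ne').comp fun y => hg (logSumExp β y))
    (hasPartials_mul_gibbsWeight hβ.ne' hg₁) (continuous_gibbsPartial hβ.ne' hg₁c hg₂)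
    (K := M + a + (b + 2 * β * a)) (fun y => ?_) (fun j y => ?_) (fun j k y => ?_)
    (sum_sum_abs_gibbsPartial_le hβ.le ha hb)
  · exact (hM _).trans (by rw [add_assoc]; exact le_add_of_nonneg_right (by positivity))
  · rw [abs_mul]
    have := (mul_le_of_le_one_right (abs_nonneg _) (abs_gibbsWeight_le_one β j y)).trans
      (ha (logSumExp β y))
    exact this.trans ((le_add_of_nonneg_left hM₀).trans (le_add_of_nonneg_right (by positivity)))
  · exact (abs_gibbsPartial_le hβ.le ha hb j k y).trans (le_add_of_nonneg_left (by positivity))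

lemma measureReal_forall_le_le_integral_comp_logSumExp [Nonempty ι] [IsFiniteMeasure μ] {β t : ℝ}
    (hβ : 0 < β) {g : ℝ → ℝ} (hg : Continuous g) (hg₀ : ∀ x, 0 ≤ g x) (hg₁ : ∀ x, g x ≤ 1)
    (hgt : ∀ x ≤ t + Real.log (Fintype.card ι) / β, g x = 1) :
    μ.real {y | ∀ j, y j ≤ t} ≤ ∫ y, g (logSumExp β y) ∂μ := by
  rw [← integral_indicator_one (measurableSet_forall_apply_le t)]
  refine integral_mono ((integrable_const 1).indicator (measurableSet_forall_apply_le t))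
    (.of_bound (hg.comp (continuous_logSumExp hβ.ne')).aestronglyMeasurable 1
      (ae_of_all _ fun y => ?_)) (Set.indicator_le' (fun y hy => ?_) fun y _ => hg₀ _)
  · rw [Real.norm_of_nonneg (hg₀ _)]
    exact hg₁ _
  · exact (hgt _ (logSumExp_le hβ hy)).ge

lemma integral_comp_logSumExp_le_measureReal_forall_le [Nonempty ι] [IsFiniteMeasure μ] {β t : ℝ}
    (hβ : 0 < β) {g : ℝ → ℝ} (hg : Continuous g) (hg₀ : ∀ x, 0 ≤ g x) (hg₁ : ∀ x, g x ≤ 1)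
    (hgt : ∀ x, t ≤ x → g x = 0) :
    ∫ y, g (logSumExp β y) ∂μ ≤ μ.real {y | ∀ j, y j ≤ t} := by
  rw [← integral_indicator_one (measurableSet_forall_apply_le t)]
  refine integral_mono (.of_bound (hg.comp (continuous_logSumExp hβ.ne')).aestronglyMeasurable 1
    (ae_of_all _ fun y => ?_)) ((integrable_const 1).indicator (measurableSet_forall_apply_le t))
    (Set.le_indicator (fun y _ => hg₁ _) fun y hy => ?_)
  · rw [Real.norm_of_nonneg (hg₀ _)]
    exact hg₁ _
  · obtain ⟨j, hj⟩ := not_forall.1 hy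
    exact (hgt _ ((not_le.1 hj).le.trans (le_logSumExp hβ j y))).le

lemma exists_measureReal_forall_le_le_add : ∃ B : ℝ, 0 < B ∧
    ∀ {ι : Type*} [Fintype ι] [Nontrivial ι] {S T : Matrix ι ι ℝ} {μ ν : Measure (ι → ℝ)},
      IsCenteredGaussian S μ → IsCenteredGaussian T ν → ∀ {Δ : ℝ}, (∀ j k, |S j k - T j k| ≤ Δ) →
      ∀ {ε : ℝ}, 0 < ε → ∀ t : ℝ, μ.real {y | ∀ j, y j ≤ t} ≤
        ν.real {y | ∀ j, y j ≤ t + 2 * ε} + B * (Δ * Real.log (Fintype.card ι) / ε ^ 2) := by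
  obtain ⟨B, hB, hcutoff⟩ := exists_smooth_cutoff
  refine ⟨6 * B, by positivity, ?_⟩
  intro ι _ _ S T μ ν hμ hν Δ hΔ ε hε t
  have := hμ.isProbabilityMeasure
  have := hν.isProbabilityMeasure
  obtain ⟨g, g₁, g₂, hg, hg₁, hg₂, hg_nonneg, hg_le, hg_one, hg_zero, hg₁_le, hg₂_le⟩ :=
    hcutoff (t + ε) ε hε
  have hgc : Continuous g := continuous_iff_continuousAt.2 fun x => (hg x).continuousAt
  have hlog₂ := Real.log_two_gt_d9
  set L := Real.log (Fintype.card ι)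
  have hL₂ : Real.log 2 ≤ L :=
    Real.log_le_log two_pos (by exact_mod_cast Fintype.one_lt_card (α := ι))
  have hL : 0 < L := by linarith
  have hΔ₀ : 0 ≤ Δ := (abs_nonneg _).trans (hΔ (Classical.arbitrary ι) (Classical.arbitrary ι))
  set β := 2 * L / ε with hβdef
  have hβ : 0 < β := by positivity
  have hLβ : L / β = ε / 2 := by rw [hβdef]; field_simp
  have hleft : μ.real {y | ∀ j, y j ≤ t} ≤ ∫ y, g (logSumExp β y) ∂μ :=
    measureReal_forall_le_le_integral_comp_logSumExp hβ hgc hg_nonneg hg_le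
      fun x hx => hg_one x (by linarith)
  have hright : ∫ y, g (logSumExp β y) ∂ν ≤ ν.real {y | ∀ j, y j ≤ t + 2 * ε} :=
    integral_comp_logSumExp_le_measureReal_forall_le hβ hgc hg_nonneg hg_le
      fun x hx => hg_zero x (by linarith)
  have hcomp := hμ.abs_integral_comp_logSumExp_sub_le hν hΔ hβ hg hg₁ hg₂
    (fun x => (abs_of_nonneg (hg_nonneg x)).trans_le (hg_le x)) hg₁_le hg₂_le
  have hbound : Δ * (B / ε ^ 2 + 2 * β * (B / ε)) ≤ 6 * B * (Δ * L / ε ^ 2) := by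
    calc Δ * (B / ε ^ 2 + 2 * β * (B / ε)) = Δ * B / ε ^ 2 * (1 + 4 * L) := by
          rw [hβdef]; field_simp; ring
      _ ≤ Δ * B / ε ^ 2 * (6 * L) := by gcongr; linarith
      _ = 6 * B * (Δ * L / ε ^ 2) := by ring
  linarith [(abs_le.1 hcomp).2]

theorem exists_abs_measureReal_forall_le_sub_le {c C : ℝ} (hc : 0 < c) (hcC : c ≤ C) :
    ∃ K : ℝ, 0 < K ∧
    ∀ {ι : Type*} [Fintype ι] [Nontrivial ι] {S T : Matrix ι ι ℝ} {μ ν : Measure (ι → ℝ)},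
      IsCenteredGaussian S μ → IsCenteredGaussian T ν → (∀ j, c ≤ T j j) → (∀ j, T j j ≤ C) →
      ∀ {Δ : ℝ}, (∀ j k, |S j k - T j k| ≤ Δ) → ∀ {ε : ℝ}, 0 < ε → ∀ t : ℝ,
        |μ.real {y | ∀ j, y j ≤ t} - ν.real {y | ∀ j, y j ≤ t}| ≤
          K * (Δ * Real.log (Fintype.card ι) / ε ^ 2 + ε * √(Real.log (Fintype.card ι))) := by
  obtain ⟨B, hB, hcomp⟩ := exists_measureReal_forall_le_le_add
  have hA : 0 < 20 / c * (2 + C / 2) := by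
    have : 0 < C := hc.trans_le hcC
    positivity
  set A := 20 / c * (2 + C / 2)
  refine ⟨A + B, by positivity, ?_⟩
  intro ι _ _ S T μ ν hμ hν hT hT' Δ hΔ ε hε t
  have := hν.isProbabilityMeasure
  have hΔ₀ : 0 ≤ Δ := (abs_nonneg _).trans (hΔ (Classical.arbitrary ι) (Classical.arbitrary ι))
  have : 0 ≤ Real.log (Fintype.card ι) := Real.log_natCast_nonneg _
  have hanti : ∀ s, ν.real {y | ∀ j, y j ≤ s + 2 * ε} ≤
      ν.real {y | ∀ j, y j ≤ s} + A * (ε * √(Real.log (Fintype.card ι))) := fun s => by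
    rw [← measureReal_inter_add_sdiff (μ := ν) (s := {y | ∀ j, y j ≤ s + 2 * ε})
      (measurableSet_forall_apply_le s)]
    exact add_le_add (measureReal_mono Set.inter_subset_right)
      (hν.measureReal_forall_le_and_not_le hc hT hT' hε s)
  have hupper := hcomp hμ hν hΔ hε t
  have hlower := hcomp hν hμ (fun j k => by rw [abs_sub_comm]; exact hΔ j k) hε (t - 2 * ε)
  have hanti' := hanti (t - 2 * ε)
  rw [sub_add_cancel] at hlower hanti'
  have h₁ : 0 ≤ Δ * Real.log (Fintype.card ι) / ε ^ 2 := by positivity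
  have h₂ : 0 ≤ ε * √(Real.log (Fintype.card ι)) := by positivity
  rw [abs_le]
  constructor <;> nlinarith [hanti t]

end Comparison

/-! ### Decoupling under absolute regularity -/

section Decoupling

lemma measureReal_le_add_half_sum_abs_sub {α : Type*} [Fintype α] [MeasurableSpace α]
    [MeasurableSingletonClass α] (μ ν : Measure α) [IsProbabilityMeasure μ]
    [IsProbabilityMeasure ν] (s : Set α) :
    μ.real s ≤ ν.real s + 1 / 2 * ∑ x, |μ.real {x} - ν.real {x}| := by
  have hsum : ∀ (ρ : Measure α) [IsProbabilityMeasure ρ], ∑ x, ρ.real {x} = 1 := fun ρ _ => by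
    rw [sum_measureReal_singleton, Finset.coe_univ, probReal_univ]
  have hs : ∀ (ρ : Measure α) [IsProbabilityMeasure ρ],
      ρ.real s = ∑ x ∈ s.toFinset, ρ.real {x} := fun ρ _ => by
    rw [sum_measureReal_singleton, Set.coe_toFinset]
  have hdiff : ∑ x ∈ s.toFinset, (μ.real {x} - ν.real {x}) ≤
      ∑ x, 1 / 2 * (μ.real {x} - ν.real {x} + |μ.real {x} - ν.real {x}|) := by
    refine (Finset.sum_le_sum fun x _ => ?_).trans
      (Finset.sum_le_univ_sum_of_nonneg fun x => ?_)
    · linarith [le_abs_self (μ.real {x} - ν.real {x})]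
    · linarith [neg_abs_le (μ.real {x} - ν.real {x})]
  rw [Finset.sum_sub_distrib, ← hs μ, ← hs ν, ← Finset.mul_sum, Finset.sum_add_distrib,
    Finset.sum_sub_distrib, hsum μ, hsum ν] at hdiff
  linarith

lemma measureReal_le_add_of_isSetAlgebra {α : Type*} [m : MeasurableSpace α] {μ ν : Measure α}
    [IsFiniteMeasure μ] [IsFiniteMeasure ν] {𝒜 : Set (Set α)} (h𝒜 : IsSetAlgebra 𝒜)
    (hgen : m = MeasurableSpace.generateFrom 𝒜) {b : ℝ} (h : ∀ s ∈ 𝒜, μ.real s ≤ ν.real s + b)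
    {s : Set α} (hs : MeasurableSet s) : μ.real s ≤ ν.real s + b := by
  refine le_of_forall_pos_le_add fun ε hε => ?_
  have hdense := Measure.MeasureDense.of_generateFrom_isSetAlgebra_finite (μ + ν) h𝒜 hgen
  obtain ⟨t, ht, hst⟩ := hdense.approx s hs (measure_ne_top _ _) ε hε
  have ht' := hdense.measurable t ht
  have hst' : μ.real (symmDiff s t) + ν.real (symmDiff s t) < ε := by
    rw [← measureReal_add_apply]
    exact (ENNReal.lt_ofReal_iff_toReal_lt (measure_ne_top _ _)).1 hst
  have hμ := abs_le.1 (abs_measureReal_sub_le_measureReal_symmDiff (μ := μ)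
    hs.nullMeasurableSet ht'.nullMeasurableSet)
  have hν := abs_le.1 (abs_measureReal_sub_le_measureReal_symmDiff (μ := ν)
    hs.nullMeasurableSet ht'.nullMeasurableSet)
  linarith [h t ht]

/-- The preimages of sets under maps `(x, y) ↦ (f x, g y)` with `f` and `g` measurable and
finite-valued, that is, the algebra of finite unions of measurable rectangles. -/
def rectangleAlgebra (α γ : Type*) [MeasurableSpace α] [MeasurableSpace γ] : Set (Set (α × γ)) :=
  {C | ∃ (M N : ℕ) (f : α → Fin M) (g : γ → Fin N) (K : Set (Fin M × Fin N)),
    Measurable f ∧ Measurable g ∧ Prod.map f g ⁻¹' K = C}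

lemma isSetAlgebra_rectangleAlgebra (α γ : Type*) [MeasurableSpace α] [MeasurableSpace γ] :
    IsSetAlgebra (rectangleAlgebra α γ) where
  empty_mem := ⟨1, 1, fun _ => 0, fun _ => 0, ∅, measurable_const, measurable_const, rfl⟩
  compl_mem := by
    rintro _ ⟨M, N, f, g, K, hf, hg, rfl⟩
    exact ⟨M, N, f, g, Kᶜ, hf, hg, rfl⟩
  union_mem := by
    rintro _ _ ⟨M, N, f, g, K, hf, hg, rfl⟩ ⟨M', N', f', g', K', hf', hg', rfl⟩
    refine ⟨M * M', N * N', fun x => finProdFinEquiv (f x, f' x),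
      fun y => finProdFinEquiv (g y, g' y),
      {z | ((finProdFinEquiv.symm z.1).1, (finProdFinEquiv.symm z.2).1) ∈ K ∨
        ((finProdFinEquiv.symm z.1).2, (finProdFinEquiv.symm z.2).2) ∈ K'},
      (measurable_of_finite _).comp (hf.prodMk hf'), (measurable_of_finite _).comp (hg.prodMk hg'),
      ?_⟩
    ext z
    simp only [Set.mem_preimage, Prod.map, Set.mem_ofPred_eq, Equiv.symm_apply_apply, Set.mem_union]

lemma generateFrom_rectangleAlgebra (α γ : Type*) [MeasurableSpace α] [MeasurableSpace γ] :
    MeasurableSpace.generateFrom (rectangleAlgebra α γ) = Prod.instMeasurableSpace := by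
  refine le_antisymm (MeasurableSpace.generateFrom_le ?_) ?_
  · rintro _ ⟨M, N, f, g, K, hf, hg, rfl⟩
    exact hf.prodMap hg K.toFinite.measurableSet
  · rw [← generateFrom_prod]
    refine MeasurableSpace.generateFrom_mono ?_
    rintro _ ⟨A, hA, B, hB, rfl⟩
    refine ⟨2, 2, fun x => if x ∈ A then 1 else 0, fun y => if y ∈ B then 1 else 0, {(1, 1)},
      .ite hA measurable_const measurable_const, .ite hB measurable_const measurable_const, ?_⟩
    ext z
    simp [Prod.map]

lemma sum_measureReal_inter_of_iUnion_eq_univ {Ω I : Type*} [Fintype I] [MeasurableSpace Ω]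
    (P : Measure Ω) [IsFiniteMeasure P] {A : I → Set Ω} (hA : ∀ i, MeasurableSet (A i))
    (hdisj : Pairwise (Function.onFun Disjoint A)) (huniv : ⋃ i, A i = Set.univ) {s : Set Ω}
    (hs : MeasurableSet s) : ∑ i, P.real (s ∩ A i) = P.real s := by
  conv_rhs => rw [← Set.inter_univ s, ← huniv, Set.inter_iUnion]
  rw [measureReal_iUnion_fintype (fun i j hij => (hdisj hij).mono Set.inter_subset_right
    Set.inter_subset_right) fun i => hs.inter (hA i)]

lemma sum_sum_abs_measureReal_inter_sub_le_two {Ω I J : Type*} [Fintype I] [Fintype J]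
    [MeasurableSpace Ω] (P : Measure Ω) [IsProbabilityMeasure P] {A : I → Set Ω} {B : J → Set Ω}
    (hA : ∀ i, MeasurableSet (A i)) (hA' : Pairwise (Function.onFun Disjoint A))
    (hAu : ⋃ i, A i = Set.univ) (hB : ∀ j, MeasurableSet (B j))
    (hB' : Pairwise (Function.onFun Disjoint B)) (hBu : ⋃ j, B j = Set.univ) :
    ∑ i, ∑ j, |P.real (A i ∩ B j) - P.real (A i) * P.real (B j)| ≤ 2 := by
  have hsumA : ∑ i, P.real (A i) = 1 := by
    simpa using sum_measureReal_inter_of_iUnion_eq_univ P hA hA' hAu MeasurableSet.univ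
  have hsumB : ∑ j, P.real (B j) = 1 := by
    simpa using sum_measureReal_inter_of_iUnion_eq_univ P hB hB' hBu MeasurableSet.univ
  calc ∑ i, ∑ j, |P.real (A i ∩ B j) - P.real (A i) * P.real (B j)|
      ≤ ∑ i, ∑ j, (P.real (A i ∩ B j) + P.real (A i) * P.real (B j)) :=
        Finset.sum_le_sum fun i _ => Finset.sum_le_sum fun j _ => (abs_sub _ _).trans_eq
          (by rw [abs_of_nonneg measureReal_nonneg, abs_of_nonneg (by positivity)])
    _ = 2 := by
        simp_rw [Finset.sum_add_distrib, ← Finset.mul_sum, hsumB, mul_one,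
          sum_measureReal_inter_of_iUnion_eq_univ P hB hB' hBu (hA _), hsumA]
        norm_num

section

variable {Ω : Type*} {m₁ m₂ : MeasurableSpace Ω} [mΩ : MeasurableSpace Ω] {P : Measure Ω}
  [IsProbabilityMeasure P]

lemma half_sum_abs_map_prodMk_sub_le_betaDep (h₁ : m₁ ≤ mΩ) (h₂ : m₂ ≤ mΩ) {M N : ℕ}
    {f : Ω → Fin M} {g : Ω → Fin N} (hf : Measurable[m₁] f) (hg : Measurable[m₂] g) :
    1 / 2 * ∑ x, |(P.map fun ω => (f ω, g ω)).real {x} - ((P.map f).prod (P.map g)).real {x}| ≤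
      betaDep P m₁ m₂ := by
  have hf' := hf.mono h₁ le_rfl
  have hg' := hg.mono h₂ le_rfl
  refine mul_le_mul_of_nonneg_left (le_csSup ⟨2, ?_⟩ ⟨M, N, fun i => f ⁻¹' {i}, fun j => g ⁻¹' {j},
    fun i => hf (.singleton i), fun i j hij => Disjoint.preimage f (by simpa using hij), ?_,
    fun j => hg (.singleton j), fun i j hij => Disjoint.preimage g (by simpa using hij), ?_, ?_⟩)
    (by norm_num)
  · rintro _ ⟨I, J, A, B, hA, hA', hAu, hB, hB', hBu, rfl⟩
    exact sum_sum_abs_measureReal_inter_sub_le_two P (fun i => h₁ _ (hA i)) hA' hAu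
      (fun j => h₂ _ (hB j)) hB' hBu
  · ext; simp
  · ext; simp
  · rw [Fintype.sum_prod_type]
    refine Finset.sum_congr rfl fun i _ => Finset.sum_congr rfl fun j _ => ?_
    rw [← Set.singleton_prod_singleton, measureReal_prod_prod,
      map_measureReal_apply (hf'.prodMk hg') ((MeasurableSet.singleton i).prod (.singleton j)),
      map_measureReal_apply hf' (.singleton i), map_measureReal_apply hg' (.singleton j)]
    rfl

theorem map_prodMk_le_prod_add_betaDep (h₁ : m₁ ≤ mΩ) (h₂ : m₂ ≤ mΩ) {α γ : Type*}
    [MeasurableSpace α] [MeasurableSpace γ] {f : Ω → α} {g : Ω → γ} (hf : Measurable[m₁] f)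
    (hg : Measurable[m₂] g) {C : Set (α × γ)} (hC : MeasurableSet C) :
    (P.map fun ω => (f ω, g ω)).real C ≤
      ((P.map f).prod (P.map g)).real C + betaDep P m₁ m₂ := by
  have hf' := hf.mono h₁ le_rfl
  have hg' := hg.mono h₂ le_rfl
  have := Measure.isProbabilityMeasure_map (μ := P) hf'.aemeasurable
  have := Measure.isProbabilityMeasure_map (μ := P) hg'.aemeasurable
  have := Measure.isProbabilityMeasure_map (μ := P) (hf'.prodMk hg').aemeasurable
  refine measureReal_le_add_of_isSetAlgebra (isSetAlgebra_rectangleAlgebra α γ)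
    (generateFrom_rectangleAlgebra α γ).symm ?_ hC
  rintro _ ⟨M, N, σ, τ, K, hσ, hτ, rfl⟩
  have hσf := hσ.comp hf'
  have hτg := hτ.comp hg'
  have := Measure.isProbabilityMeasure_map (μ := P) hσf.aemeasurable
  have := Measure.isProbabilityMeasure_map (μ := P) hτg.aemeasurable
  have : IsProbabilityMeasure (P.map fun ω => (σ (f ω), τ (g ω))) :=
    Measure.isProbabilityMeasure_map (hσf.prodMk hτg).aemeasurable
  have hK : MeasurableSet K := K.toFinite.measurableSet
  have hfinite := (measureReal_le_add_half_sum_abs_sub (P.map fun ω => (σ (f ω), τ (g ω)))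
    ((P.map (σ ∘ f)).prod (P.map (τ ∘ g))) K).trans
    (add_le_add_right (half_sum_abs_map_prodMk_sub_le_betaDep h₁ h₂ (hσ.comp hf) (hτ.comp hg)) _)
  rw [← map_measureReal_apply (hσ.prodMap hτ) hK, ← map_measureReal_apply (hσ.prodMap hτ) hK,
    Measure.map_map (hσ.prodMap hτ) (hf'.prodMk hg'), ← Measure.map_prod_map _ _ hσ hτ,
    Measure.map_map hσ hf', Measure.map_map hτ hg']
  exact hfinite

lemma prod_le_prod_add {α γ : Type*} [MeasurableSpace α] [MeasurableSpace γ] {μ ν : Measure α}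
    {b : ℝ≥0∞} [SFinite μ] [SFinite ν] (h : ∀ s, MeasurableSet s → μ s ≤ ν s + b) (ρ : Measure γ)
    [IsProbabilityMeasure ρ] {C : Set (α × γ)} (hC : MeasurableSet C) :
    μ.prod ρ C ≤ ν.prod ρ C + b := by
  rw [Measure.prod_apply_symm hC, Measure.prod_apply_symm hC]
  calc ∫⁻ y, μ ((fun x => (x, y)) ⁻¹' C) ∂ρ ≤ ∫⁻ y, (ν ((fun x => (x, y)) ⁻¹' C) + b) ∂ρ :=
        lintegral_mono fun y => h _ (measurable_prodMk_right hC)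
    _ = _ := by rw [lintegral_add_right _ measurable_const, lintegral_const, measure_univ, mul_one]

lemma measurable_snoc {α : Type*} [MeasurableSpace α] (n : ℕ) :
    Measurable fun x : (Fin n → α) × α => (Fin.snoc x.1 x.2 : Fin (n + 1) → α) := by
  refine measurable_pi_iff.2 fun i => ?_
  induction i using Fin.lastCases with
  | last => simpa only [Fin.snoc_last] using measurable_snd
  | cast i =>
    simpa only [Fin.snoc_castSucc, Function.comp_def] using
      (measurable_pi_apply i).comp measurable_fst

lemma map_snoc_pi_prod {α : Type*} [MeasurableSpace α] {n : ℕ} (ρ : Fin (n + 1) → Measure α)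
    [∀ i, SigmaFinite (ρ i)] :
    ((Measure.pi fun i : Fin n => ρ i.castSucc).prod (ρ (Fin.last n))).map
      (fun x => (Fin.snoc x.1 x.2 : Fin (n + 1) → α)) = Measure.pi ρ := by
  refine (Measure.pi_eq fun s hs => ?_).symm
  have hpre : (fun x : (Fin n → α) × α => (Fin.snoc x.1 x.2 : Fin (n + 1) → α)) ⁻¹'
      Set.univ.pi s = (Set.univ.pi fun i => s i.castSucc) ×ˢ s (Fin.last n) := by
    ext x
    simp [Fin.forall_fin_succ', Set.mem_pi]
  rw [Measure.map_apply (measurable_snoc n) (.univ_pi hs), hpre, Measure.prod_prod, Measure.pi_pi,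
    Fin.prod_univ_castSucc]

lemma map_pi_succ_le_pi_add {α : Type*} [MeasurableSpace α] (h₁ : m₁ ≤ mΩ) (h₂ : m₂ ≤ mΩ)
    {X : ℕ → Ω → α} (hX : ∀ k, Measurable (X k)) {n : ℕ} (hpast : ∀ i ≤ n, Measurable[m₁] (X i))
    (hnext : Measurable[m₂] (X (n + 1))) {b : ℝ≥0∞}
    (h : ∀ s : Set (Fin (n + 1) → α), MeasurableSet s →
      P.map (fun ω (i : Fin (n + 1)) => X i ω) s ≤
        Measure.pi (fun i : Fin (n + 1) => P.map (X i)) s + b)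
    {C : Set (Fin (n + 1 + 1) → α)} (hC : MeasurableSet C) :
    P.map (fun ω (i : Fin (n + 1 + 1)) => X i ω) C ≤
      Measure.pi (fun i : Fin (n + 1 + 1) => P.map (X i)) C +
        (b + ENNReal.ofReal (betaDep P m₁ m₂)) := by
  have hprob : ∀ k, IsProbabilityMeasure (P.map (X k)) := fun k =>
    Measure.isProbabilityMeasure_map (hX k).aemeasurable
  set past := fun ω (i : Fin (n + 1)) => X i ω
  have hpast_meas : Measurable past := measurable_pi_lambda _ fun i => hX i
  have hpast' : Measurable[m₁] past :=
    @measurable_pi_lambda _ _ _ m₁ _ _ fun i => hpast i (by omega)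
  have := Measure.isProbabilityMeasure_map (μ := P) hpast_meas.aemeasurable
  have := Measure.isProbabilityMeasure_map (μ := P)
    (hpast_meas.prodMk (hX (n + 1))).aemeasurable
  have hsnoc : (fun ω (i : Fin (n + 1 + 1)) => X i ω) =
      (fun x => Fin.snoc x.1 x.2) ∘ fun ω => (past ω, X (n + 1) ω) := by
    funext ω i
    induction i using Fin.lastCases <;> simp [past]
  set D := (fun x : (Fin (n + 1) → α) × α => (Fin.snoc x.1 x.2 : Fin (n + 1 + 1) → α)) ⁻¹' C
  have hD : MeasurableSet D := measurable_snoc (n + 1) hC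
  rw [hsnoc, ← Measure.map_map (measurable_snoc _) (hpast_meas.prodMk (hX _)),
    Measure.map_apply (measurable_snoc _) hC, ← map_snoc_pi_prod,
    Measure.map_apply (measurable_snoc _) hC, ← add_assoc]
  refine le_trans ?_ (add_le_add_left (prod_le_prod_add h _ hD) _)
  rw [← ofReal_measureReal, ← ofReal_measureReal]
  exact (ENNReal.ofReal_le_ofReal (map_prodMk_le_prod_add_betaDep h₁ h₂ hpast' hnext hD)).trans
    ENNReal.ofReal_add_le

end

theorem map_pi_le_pi_add_mul {Ω α : Type*} [mΩ : MeasurableSpace Ω] {P : Measure Ω}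
    [IsProbabilityMeasure P] [MeasurableSpace α] {X : ℕ → Ω → α} {b : ℝ≥0∞}
    {m₁ m₂ : ℕ → MeasurableSpace Ω} (h₁ : ∀ k, m₁ k ≤ mΩ) (h₂ : ∀ k, m₂ k ≤ mΩ)
    (hX : ∀ k, Measurable (X k)) (n : ℕ) (hpast : ∀ k < n, ∀ i ≤ k, Measurable[m₁ k] (X i))
    (hnext : ∀ k < n, Measurable[m₂ k] (X (k + 1)))
    (hb : ∀ k < n, ENNReal.ofReal (betaDep P (m₁ k) (m₂ k)) ≤ b) {C : Set (Fin (n + 1) → α)}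
    (hC : MeasurableSet C) :
    P.map (fun ω (i : Fin (n + 1)) => X i ω) C ≤
      Measure.pi (fun i : Fin (n + 1) => P.map (X i)) C + n * b := by
  have : ∀ k, IsProbabilityMeasure (P.map (X k)) := fun k =>
    Measure.isProbabilityMeasure_map (hX k).aemeasurable
  induction n with
  | zero =>
    have heq : Measure.pi (fun i : Fin 1 => P.map (X i)) = P.map fun ω (i : Fin 1) => X i ω :=
      Measure.pi_eq fun s hs => by
        rw [Measure.map_apply (measurable_pi_lambda _ fun i : Fin 1 => hX i) (.univ_pi hs),
          Fin.prod_univ_one, Measure.map_apply (hX _) (hs 0)]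
        congr 1
        ext ω
        simp [Set.mem_pi]
    rw [heq, Nat.cast_zero, zero_mul, add_zero]
  | succ n ih =>
    refine (map_pi_succ_le_pi_add (h₁ n) (h₂ n) hX (hpast n (by omega)) (hnext n (by omega))
      (fun s hs => ih (fun k hk => hpast k (by omega)) (fun k hk => hnext k (by omega))
        (fun k hk => hb k (by omega)) hs) hC).trans ?_
    rw [Nat.cast_succ, add_mul, one_mul]
    gcongr
    exact hb n (by omega)

end Decoupling

/-! ### Bernstein's inequality for second moments -/

section Bernstein

variable {Ω : Type*} [MeasurableSpace Ω] {P : Measure Ω}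

lemma ae_abs_mul_le {Y Z : Ω → ℝ} {R : ℝ} (hY : ∀ᵐ ω ∂P, |Y ω| ≤ R) (hZ : ∀ᵐ ω ∂P, |Z ω| ≤ R) :
    ∀ᵐ ω ∂P, |Y ω * Z ω| ≤ R ^ 2 := by
  filter_upwards [hY, hZ] with ω hYω hZω
  rw [abs_mul, sq]
  exact mul_le_mul hYω hZω (abs_nonneg _) ((abs_nonneg _).trans hYω)

variable [IsProbabilityMeasure P]

lemma integrable_exp_mul_of_abs_le {Z : Ω → ℝ} {B : ℝ} (hZ : AEMeasurable Z P)
    (hB : ∀ᵐ ω ∂P, |Z ω| ≤ B) (θ : ℝ) : Integrable (fun ω => Real.exp (θ * Z ω)) P := by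
  refine .of_bound (by fun_prop) (Real.exp (|θ| * B)) ?_
  filter_upwards [hB] with ω hω
  rw [Real.norm_eq_abs, Real.abs_exp, Real.exp_le_exp]
  calc θ * Z ω ≤ |θ| * |Z ω| := (le_abs_self _).trans_eq (abs_mul _ _)
    _ ≤ |θ| * B := by gcongr

lemma mgf_le_exp_of_abs_le {Z : Ω → ℝ} {B θ : ℝ} (hZ : AEMeasurable Z P)
    (hB : ∀ᵐ ω ∂P, |Z ω| ≤ B) (hmean : ∫ ω, Z ω ∂P = 0) (hθ : |θ| * B ≤ 1) :
    mgf Z P θ ≤ Real.exp (θ ^ 2 * variance Z P) := by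
  have hLp : MemLp Z 2 P := .of_bound hZ.aestronglyMeasurable B hB
  have hlin : Integrable (fun ω => 1 + θ * Z ω) P :=
    (integrable_const _).add ((hLp.integrable one_le_two).const_mul θ)
  have hsq : Integrable (fun ω => θ ^ 2 * Z ω ^ 2) P := hLp.integrable_sq.const_mul _
  calc ∫ ω, Real.exp (θ * Z ω) ∂P
      ≤ ∫ ω, (1 + θ * Z ω + θ ^ 2 * Z ω ^ 2) ∂P := by
        refine integral_mono_ae (integrable_exp_mul_of_abs_le hZ hB θ) (hlin.add hsq) ?_
        filter_upwards [hB] with ω hω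
        have hle : |θ * Z ω| ≤ 1 := by
          rw [abs_mul]
          exact (mul_le_mul_of_nonneg_left hω (abs_nonneg θ)).trans hθ
        have := (abs_le.1 (Real.abs_exp_sub_one_sub_id_le hle)).2
        rw [mul_pow] at this
        linarith
    _ = θ ^ 2 * variance Z P + 1 := by
        rw [integral_add hlin hsq, integral_add (integrable_const _)
          ((hLp.integrable one_le_two).const_mul θ), integral_const_mul, integral_const_mul, hmean,
          variance_of_integral_eq_zero hZ hmean]
        simp [add_comm]
    _ ≤ _ := Real.add_one_le_exp _

lemma variance_mul_le {Y Z : Ω → ℝ} {R : ℝ} (hYm : Measurable Y) (hZm : Measurable Z)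
    (hY : ∀ᵐ ω ∂P, |Y ω| ≤ R) (hZ : ∀ᵐ ω ∂P, |Z ω| ≤ R) :
    variance (fun ω => Y ω * Z ω) P ≤ R ^ 2 * ∫ ω, Z ω ^ 2 ∂P := by
  have hint : Integrable (fun ω => Z ω ^ 2) P :=
    (MemLp.of_bound hZm.aestronglyMeasurable R hZ).integrable_sq
  refine (variance_le_expectation_sq (hYm.mul hZm).aestronglyMeasurable).trans ?_
  rw [← integral_const_mul]
  refine integral_mono_of_nonneg (Eventually.of_forall fun ω => sq_nonneg _) (hint.const_mul _) ?_
  filter_upwards [hY] with ω hω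
  simp only [Pi.pow_apply, Pi.mul_apply, mul_pow]
  exact mul_le_mul_of_nonneg_right (sq_le_sq' (neg_le_of_abs_le hω) (le_of_abs_le hω))
    (sq_nonneg _)

variable {τ : Type*} [Fintype τ]

theorem measureReal_sum_sub_integral_ge_le {X : τ → Ω → ℝ} (hindep : iIndepFun X P)
    (hX : ∀ l, Measurable (X l)) {B V θ : ℝ} (hB : ∀ l, ∀ᵐ ω ∂P, |X l ω| ≤ B)
    (hV : ∑ l, variance (X l) P ≤ V) (hθ : 0 ≤ θ) (hθB : θ * (2 * B) ≤ 1) (s : ℝ) :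
    P.real {ω | s ≤ ∑ l, (X l ω - ∫ ω, X l ω ∂P)} ≤ Real.exp (-θ * s + θ ^ 2 * V) := by
  set Z : τ → Ω → ℝ := fun l ω => X l ω - ∫ ω, X l ω ∂P
  have hZ : ∀ l, Measurable (Z l) := fun l => (hX l).sub_const _
  have hZindep : iIndepFun Z P := hindep.comp (fun l x => x - ∫ ω, X l ω ∂P)
    fun l => measurable_id.sub_const _
  have hZB : ∀ l, ∀ᵐ ω ∂P, |Z l ω| ≤ 2 * B := fun l => by
    have hmean : |∫ ω, X l ω ∂P| ≤ B := by
      simpa using norm_integral_le_of_norm_le_const (f := X l) (hB l)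
    filter_upwards [hB l] with ω hω
    linarith [abs_sub (X l ω) (∫ ω, X l ω ∂P)]
  have hZ0 : ∀ l, ∫ ω, Z l ω ∂P = 0 := fun l => by
    rw [integral_sub (.of_bound (hX l).aestronglyMeasurable B (hB l)) (integrable_const _)]
    simp
  have hint : Integrable (fun ω => Real.exp (θ * (∑ l, Z l) ω)) P :=
    hZindep.integrable_exp_mul_sum hZ fun l _ =>
      integrable_exp_mul_of_abs_le (hZ l).aemeasurable (hZB l) θ
  have hset : {ω | s ≤ ∑ l, Z l ω} = {ω | s ≤ (∑ l, Z l) ω} := by simp only [Finset.sum_apply]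
  rw [hset, Real.exp_add]
  refine (measure_ge_le_exp_mul_mgf s hθ hint).trans
    (mul_le_mul_of_nonneg_left ?_ (Real.exp_pos _).le)
  calc mgf (∑ l, Z l) P θ = ∏ l, mgf (Z l) P θ := hZindep.mgf_sum hZ _
    _ ≤ ∏ l, Real.exp (θ ^ 2 * variance (X l) P) :=
        Finset.prod_le_prod (fun l _ => mgf_nonneg) fun l _ => by
          rw [← variance_sub_const (hX l).aestronglyMeasurable (∫ ω, X l ω ∂P)]
          exact mgf_le_exp_of_abs_le (hZ l).aemeasurable (hZB l) (hZ0 l)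
            (by rwa [abs_of_nonneg hθ])
    _ = Real.exp (θ ^ 2 * ∑ l, variance (X l) P) := by rw [← Real.exp_sum, Finset.mul_sum]
    _ ≤ _ := by gcongr

lemma measureReal_lt_abs_sum_sub_integral_le {X : τ → Ω → ℝ} (hindep : iIndepFun X P)
    (hX : ∀ l, Measurable (X l)) {B V θ : ℝ} (hB : ∀ l, ∀ᵐ ω ∂P, |X l ω| ≤ B)
    (hV : ∑ l, variance (X l) P ≤ V) (hθ : 0 ≤ θ) (hθB : θ * (2 * B) ≤ 1) (s : ℝ) :
    P.real {ω | s < |∑ l, (X l ω - ∫ ω, X l ω ∂P)|} ≤ 2 * Real.exp (-θ * s + θ ^ 2 * V) := by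
  have hpos := measureReal_sum_sub_integral_ge_le hindep hX hB hV hθ hθB s
  have hneg := measureReal_sum_sub_integral_ge_le (X := fun l => -X l)
    (hindep.comp (fun _ x => -x) fun _ => measurable_neg) (fun l => (hX l).neg)
    (by simpa only [Pi.neg_apply, abs_neg] using hB) (by simpa only [variance_neg] using hV)
    hθ hθB s
  have hsub : {ω | s < |∑ l, (X l ω - ∫ ω, X l ω ∂P)|} ⊆
      {ω | s ≤ ∑ l, (X l ω - ∫ ω, X l ω ∂P)} ∪
        {ω | s ≤ ∑ l, ((-X l) ω - ∫ ω, (-X l) ω ∂P)} := by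
    intro ω hω
    refine (lt_abs.1 hω).imp (fun h => Set.mem_ofPred_eq ▸ h.le) fun h => ?_
    simpa only [Set.mem_ofPred_eq, Pi.neg_apply, integral_neg, ← Finset.sum_neg_distrib,
      neg_sub_neg, neg_sub] using h.le
  linarith [(measureReal_mono (μ := P) hsub).trans (measureReal_union_le _ _)]

variable {ι : Type*} [Fintype ι]

theorem measureReal_exists_lt_abs_sum_mul_sub_integral_le {ξ : τ → Ω → ι → ℝ}
    (hindep : iIndepFun ξ P) (hξ : ∀ l, Measurable (ξ l)) {R G θ : ℝ}
    (hR : ∀ l, ∀ᵐ ω ∂P, ∀ j, |ξ l ω j| ≤ R) (hG : ∀ l j, ∫ ω, ξ l ω j ^ 2 ∂P ≤ G)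
    (hθ : 0 ≤ θ) (hθR : θ * (2 * R ^ 2) ≤ 1) (s : ℝ) :
    P.real {ω | ∃ j k, s < |∑ l, (ξ l ω j * ξ l ω k - ∫ ω, ξ l ω j * ξ l ω k ∂P)|} ≤
      2 * (Fintype.card ι : ℝ) ^ 2 *
        Real.exp (-θ * s + θ ^ 2 * (Fintype.card τ * (R ^ 2 * G))) := by
  have hcoord : ∀ l j, Measurable fun ω => ξ l ω j := fun l j => (measurable_pi_apply j).comp (hξ l)
  have hcoordR : ∀ l j, ∀ᵐ ω ∂P, |ξ l ω j| ≤ R := fun l j => (hR l).mono fun ω hω => hω j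
  have hvar : ∀ l j k, variance (fun ω => ξ l ω j * ξ l ω k) P ≤ R ^ 2 * G := fun l j k =>
    (variance_mul_le (hcoord l j) (hcoord l k) (hcoordR l j) (hcoordR l k)).trans
      (mul_le_mul_of_nonneg_left (hG l k) (sq_nonneg R))
  have hentry : ∀ jk : ι × ι, P.real {ω | s < |∑ l, (ξ l ω jk.1 * ξ l ω jk.2 -
      ∫ ω, ξ l ω jk.1 * ξ l ω jk.2 ∂P)|} ≤
        2 * Real.exp (-θ * s + θ ^ 2 * (Fintype.card τ * (R ^ 2 * G))) := fun jk =>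
    measureReal_lt_abs_sum_sub_integral_le
      (hindep.comp (fun _ x => x jk.1 * x jk.2) fun _ => by fun_prop)
      (fun l => (hcoord l jk.1).mul (hcoord l jk.2))
      (fun l => ae_abs_mul_le (hcoordR l jk.1) (hcoordR l jk.2))
      ((Finset.sum_le_sum fun l _ => hvar l jk.1 jk.2).trans_eq (by simp)) hθ hθR s
  have hunion : {ω | ∃ j k, s < |∑ l, (ξ l ω j * ξ l ω k - ∫ ω, ξ l ω j * ξ l ω k ∂P)|} =
      ⋃ jk : ι × ι, {ω | s < |∑ l, (ξ l ω jk.1 * ξ l ω jk.2 -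
        ∫ ω, ξ l ω jk.1 * ξ l ω jk.2 ∂P)|} := by
    ext ω
    simp
  rw [hunion]
  refine (measureReal_iUnion_fintype_le _).trans
    ((Finset.sum_le_sum fun jk _ => hentry jk).trans_eq ?_)
  simp only [Finset.sum_const, Finset.card_univ, Fintype.card_prod, nsmul_eq_mul, Nat.cast_mul]
  ring

end Bernstein

/-! ### Large blocks -/

section SecondMoment

variable {Ω ι : Type*} [MeasurableSpace Ω] {P : Measure Ω} [Finite ι]

lemma posSemidef_of_integral_mul {f : ι → Ω → ℝ} (hf : ∀ j, MemLp (f j) 2 P) :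
    (Matrix.of fun j k => ∫ ω, f j ω * f k ω ∂P).PosSemidef := by
  have hgram : (Matrix.of fun j k => ∫ ω, f j ω * f k ω ∂P) =
      Matrix.gram ℝ fun j => (hf j).toLp (f j) := by
    ext j k
    rw [Matrix.gram_apply, L2.inner_def, Matrix.of_apply]
    refine integral_congr_ae ?_
    filter_upwards [(hf j).coeFn_toLp, (hf k).coeFn_toLp] with ω hj hk
    rw [hj, hk, RCLike.inner_apply, conj_trivial, mul_comm]
  exact hgram ▸ Matrix.posSemidef_gram ℝ _

end SecondMoment

/-- The vector `S_l` of sums over the `l`-th large block, indexed from `0`. -/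
def blockVec (n p q r l : ℕ) (ω : Fin n → Fin p → ℝ) : Fin p → ℝ :=
  fun j => blockSum n p (l * (q + r)) q j ω

/-- The matrix with rows the large-block sums `S_1, …, S_m`. -/
def blockMatrix (n p q r : ℕ) (ω : Fin n → Fin p → ℝ) :
    Matrix (Fin (nBlocks n q r)) (Fin p) ℝ :=
  Matrix.of fun l => blockVec n p q r l ω

/-- The second-moment matrix `(mq)⁻¹ Σ_l x_l x_lᵀ` of `m` vectors, which are meant to be sums over
blocks of length `q`. At the observed block sums it is the conditional covariance matrix of the
bootstrap vector `(mq)^{-1/2} Σ_l ε_l S_l`. -/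
def blockGram {m p : ℕ} (q : ℕ) (x : Matrix (Fin m) (Fin p) ℝ) : Matrix (Fin p) (Fin p) ℝ :=
  ((m * q : ℕ) : ℝ)⁻¹ • (xᵀ * x)

/-- The joint law of independent copies of the large-block sums `S_1, …, S_m`. -/
def indepBlockLaw (n p q r : ℕ) (Pm : Measure (Fin n → Fin p → ℝ)) :
    Measure (Fin (nBlocks n q r) → Fin p → ℝ) :=
  Measure.pi fun l => Pm.map (blockVec n p q r l)

section Blocks

variable {n p q r : ℕ}

lemma nBlocks_mul_le : nBlocks n q r * (q + r) ≤ n := Nat.div_mul_le_self _ _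

lemma nBlocks_pos (hr : 1 ≤ r) (hn : 2 * (q + r) ≤ n) : 0 < nBlocks n q r :=
  Nat.div_pos (by omega) (by omega)

lemma block_end_le (l : Fin (nBlocks n q r)) : (l : ℕ) * (q + r) + q ≤ n := by
  have hl : ((l : ℕ) + 1) * (q + r) ≤ nBlocks n q r * (q + r) := Nat.mul_le_mul_right _ l.2
  have hle := nBlocks_mul_le (n := n) (q := q) (r := r)
  rw [add_mul] at hl
  omega

lemma le_four_mul_nBlocks_mul (hr : 1 ≤ r) (hrq : r < q) (hn : 2 * (q + r) ≤ n) :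
    (n : ℝ) ≤ 4 * (nBlocks n q r * q : ℕ) := by
  have hlt : n < (nBlocks n q r + 1) * (q + r) := by
    rw [nBlocks, mul_comm]
    exact Nat.lt_mul_div_succ n (by omega)
  have htwo : 2 ≤ nBlocks n q r := (Nat.le_div_iff_mul_le (by omega)).2 hn
  exact_mod_cast show n ≤ 4 * (nBlocks n q r * q) by nlinarith

lemma measurable_blockSum_of_forall {m₀ : MeasurableSpace (Fin n → Fin p → ℝ)} {a : ℕ}
    (h : ∀ i : Fin n, a ≤ (i : ℕ) → (i : ℕ) < a + q →
      Measurable[m₀] fun ω : Fin n → Fin p → ℝ => ω i) (j : Fin p) :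
    Measurable[m₀] (blockSum n p a q j) := by
  unfold blockSum
  refine Finset.measurable_sum _ fun i _ => ?_
  split_ifs with hi
  · exact (measurable_pi_apply j).comp (h i hi.1 hi.2)
  · exact measurable_const

lemma measurable_blockSum (a : ℕ) (j : Fin p) : Measurable (blockSum n p a q j) :=
  measurable_blockSum_of_forall (fun i _ _ => measurable_pi_apply i) j

lemma measurable_blockVec (l : ℕ) : Measurable (blockVec n p q r l) :=
  measurable_pi_lambda _ fun _ => measurable_blockSum _ _

lemma sigmaUpTo_le (l : ℕ) : sigmaUpTo n p l ≤ MeasurableSpace.pi :=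
  iSup₂_le fun i _ => (measurable_pi_apply i).comap_le

lemma sigmaFrom_le (l : ℕ) : sigmaFrom n p l ≤ MeasurableSpace.pi :=
  iSup₂_le fun i _ => (measurable_pi_apply i).comap_le

lemma measurable_sigmaUpTo_blockVec {k l : ℕ} (h : l * (q + r) + q ≤ k) :
    Measurable[sigmaUpTo n p k] (blockVec n p q r l) := by
  refine @measurable_pi_lambda _ _ _ (_) _ _ fun j =>
    measurable_blockSum_of_forall (fun i _ hi => ?_) j
  exact (comap_measurable _).mono (le_iSup₂_of_le i (by omega) le_rfl) le_rfl

lemma measurable_sigmaFrom_blockVec {k l : ℕ} (h : k ≤ l * (q + r)) :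
    Measurable[sigmaFrom n p k] (blockVec n p q r l) := by
  refine @measurable_pi_lambda _ _ _ (_) _ _ fun j =>
    measurable_blockSum_of_forall (fun i hi _ => ?_) j
  exact (comap_measurable _).mono (le_iSup₂_of_le i (by omega) le_rfl) le_rfl

lemma abs_blockSum_le {D : ℝ} (hD : 0 ≤ D) {ω : Fin n → Fin p → ℝ} (hω : ∀ i j, |ω i j| ≤ D)
    (a : ℕ) (j : Fin p) : |blockSum n p a q j ω| ≤ q * D := by
  set s : Finset (Fin n) := {i | a ≤ (i : ℕ) ∧ (i : ℕ) < a + q} with hs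
  have hcard : s.card ≤ q := by
    simpa using Finset.card_le_card_of_injOn (t := Finset.Ico a (a + q)) (fun i : Fin n => (i : ℕ))
      (fun i hi => by simpa [hs] using hi) (fun i _ j _ h => Fin.ext h)
  rw [blockSum, ← Finset.sum_filter, ← hs]
  calc |∑ i ∈ s, ω i j| ≤ ∑ i ∈ s, |ω i j| := Finset.abs_sum_le_sum_abs _ _
    _ ≤ s.card • D := Finset.sum_le_card_nsmul _ _ D fun i _ => hω i j
    _ ≤ q * D := by
        rw [nsmul_eq_mul]
        gcongr

variable {Pm : Measure (Fin n → Fin p → ℝ)}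

lemma betaDep_le_bmix {k l : ℕ} (hl : l < n - k) :
    betaDep Pm (sigmaUpTo n p (l + 1)) (sigmaFrom n p (l + k)) ≤ bmix n p Pm k :=
  le_ciSup (f := fun l : Fin (n - k) =>
    betaDep Pm (sigmaUpTo n p ((l : ℕ) + 1)) (sigmaFrom n p ((l : ℕ) + k)))
    (Set.finite_range _).bddAbove ⟨l, hl⟩

lemma bmix_nonneg (k : ℕ) : 0 ≤ bmix n p Pm k := by
  refine Real.iSup_nonneg fun _ => mul_nonneg (by norm_num) (Real.sSup_nonneg ?_)
  rintro x ⟨I, J, A, B, -, -, -, -, -, -, rfl⟩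
  positivity

lemma sigmaLowSq_le_variance {a : ℕ} (ha : a + q ≤ n) (j : Fin p) :
    sigmaLowSq n p Pm q ≤ variance (fun ω => blockSum n p a q j ω / √q) Pm :=
  (ciInf_le (Set.finite_range _).bddBelow j).trans
    (ciInf_le (Set.finite_range _).bddBelow (⟨a, by omega⟩ : Fin (n - q + 1)))

lemma variance_le_sigmaBarSq {a : ℕ} (ha : a + q ≤ n) (j : Fin p) :
    variance (fun ω => blockSum n p a q j ω / √q) Pm ≤ sigmaBarSq n p Pm q :=
  (le_ciSup (f := fun a : Fin (n - q + 1) => variance (fun ω => blockSum n p a q j ω / √q) Pm)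
    (Set.finite_range _).bddAbove ⟨a, by omega⟩).trans
      (le_ciSup (f := fun j => ⨆ a : Fin (n - q + 1),
        variance (fun ω => blockSum n p a q j ω / √q) Pm) (Set.finite_range _).bddAbove j)

variable [IsProbabilityMeasure Pm]

instance (l : ℕ) : IsProbabilityMeasure (Pm.map (blockVec n p q r l)) :=
  Measure.isProbabilityMeasure_map (measurable_blockVec l).aemeasurable

instance : IsProbabilityMeasure (indepBlockLaw n p q r Pm) :=
  inferInstanceAs (IsProbabilityMeasure (Measure.pi _))

/-- The large blocks are `r` apart, so making them independent one at a time costs `b_r` for each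
but the first. -/
theorem measureReal_blockVec_mem_le (hr : 1 ≤ r) (hq : 0 < q) (hn : 2 * (q + r) ≤ n)
    {C : Set (Fin (nBlocks n q r) → Fin p → ℝ)} (hC : MeasurableSet C) :
    Pm.real {ω | (fun l : Fin (nBlocks n q r) => blockVec n p q r l ω) ∈ C} ≤
      (indepBlockLaw n p q r Pm).real C + ((nBlocks n q r : ℝ) - 1) * bmix n p Pm r := by
  unfold indepBlockLaw
  obtain ⟨k, hk⟩ : ∃ k, nBlocks n q r = k + 1 :=
    Nat.exists_eq_succ_of_ne_zero (nBlocks_pos hr hn).ne'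
  have hend : (k + 1) * (q + r) ≤ n := hk ▸ nBlocks_mul_le
  have hdecouple {C'} (hC' : MeasurableSet C') := map_pi_le_pi_add_mul (P := Pm)
    (X := blockVec n p q r) (b := ENNReal.ofReal (bmix n p Pm r))
    (m₁ := fun k => sigmaUpTo n p (k * (q + r) + q - 1 + 1))
    (m₂ := fun k => sigmaFrom n p (k * (q + r) + q - 1 + r)) (fun _ => sigmaUpTo_le _)
    (fun _ => sigmaFrom_le _) measurable_blockVec k
    (fun l _ i hi => measurable_sigmaUpTo_blockVec (by
      have := Nat.mul_le_mul_right (q + r) hi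
      omega))
    (fun l _ => measurable_sigmaFrom_blockVec (by rw [add_mul]; omega))
    (fun l hl => ENNReal.ofReal_le_ofReal (betaDep_le_bmix (by
      have hlast : (l + 2) * (q + r) ≤ (k + 1) * (q + r) := Nat.mul_le_mul_right _ (by omega)
      rw [add_mul l] at hlast
      omega))) hC'
  generalize nBlocks n q r = m at C hC hk
  subst hk
  have hle := ENNReal.toReal_mono (by finiteness) (hdecouple hC)
  rw [Measure.map_apply (measurable_pi_lambda _ fun i : Fin (k + 1) => measurable_blockVec _) hC,
    ENNReal.toReal_add (by finiteness) (by finiteness), ENNReal.toReal_mul,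
    ENNReal.toReal_ofReal (bmix_nonneg r), ENNReal.toReal_natCast] at hle
  push_cast
  rw [add_sub_cancel_right]
  exact hle

lemma memLp_blockSum {D : ℝ} (hD : 0 ≤ D) (hb : ∀ᵐ ω ∂Pm, ∀ i j, |ω i j| ≤ D) (a : ℕ) (j : Fin p) :
    MemLp (blockSum n p a q j) 2 Pm :=
  .of_bound (measurable_blockSum a j).aestronglyMeasurable (q * D)
    (hb.mono fun _ hω => abs_blockSum_le hD hω a j)

lemma integral_blockSum_eq_zero {D : ℝ} (hb : ∀ᵐ ω ∂Pm, ∀ i j, |ω i j| ≤ D)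
    (h0 : ∀ i j, ∫ ω, ω i j ∂Pm = 0) (a : ℕ) (j : Fin p) : ∫ ω, blockSum n p a q j ω ∂Pm = 0 := by
  have hint : ∀ i, Integrable (fun ω : Fin n → Fin p → ℝ => ω i j) Pm := fun i =>
    .of_bound (Measurable.aestronglyMeasurable (by fun_prop)) D (hb.mono fun _ hω => hω i j)
  unfold blockSum
  simp_rw [← Finset.sum_filter]
  rw [integral_finsetSum _ fun i _ => hint i]
  exact Finset.sum_eq_zero fun i _ => h0 i j

lemma integral_blockSum_mul_self {D : ℝ} (hb : ∀ᵐ ω ∂Pm, ∀ i j, |ω i j| ≤ D)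
    (h0 : ∀ i j, ∫ ω, ω i j ∂Pm = 0) (hq : 0 < q) (a : ℕ) (j : Fin p) :
    ∫ ω, blockSum n p a q j ω * blockSum n p a q j ω ∂Pm =
      q * variance (fun ω => blockSum n p a q j ω / √q) Pm := by
  have hmean : ∫ ω, blockSum n p a q j ω / √q ∂Pm = 0 := by
    rw [integral_div, integral_blockSum_eq_zero hb h0, zero_div]
  rw [variance_of_integral_eq_zero ((measurable_blockSum a j).div_const _).aemeasurable hmean]
  simp only [div_pow, Real.sq_sqrt (Nat.cast_nonneg q)]
  rw [integral_div, mul_div_cancel₀ _ (by positivity)]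
  simp_rw [sq]

lemma blockCov_self {D : ℝ} (hb : ∀ᵐ ω ∂Pm, ∀ i j, |ω i j| ≤ D)
    (h0 : ∀ i j, ∫ ω, ω i j ∂Pm = 0) (hq : 0 < q) (j : Fin p) :
    blockCov n p q r Pm j j = (nBlocks n q r : ℝ)⁻¹ * ∑ l : Fin (nBlocks n q r),
      variance (fun ω => blockSum n p (l * (q + r)) q j ω / √q) Pm := by
  simp_rw [blockCov, integral_blockSum_mul_self hb h0 hq, ← Finset.mul_sum]
  rw [← mul_assoc, Nat.cast_mul, mul_inv, inv_mul_cancel_right₀ (by positivity)]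

lemma sigmaLowSq_le_blockCov {D : ℝ} (hb : ∀ᵐ ω ∂Pm, ∀ i j, |ω i j| ≤ D)
    (h0 : ∀ i j, ∫ ω, ω i j ∂Pm = 0) (hq : 0 < q) (hm : 0 < nBlocks n q r) (j : Fin p) :
    sigmaLowSq n p Pm q ≤ blockCov n p q r Pm j j := by
  rw [blockCov_self hb h0 hq, le_inv_mul_iff₀ (by positivity)]
  simpa using Finset.card_nsmul_le_sum Finset.univ _ _ fun (l : Fin (nBlocks n q r)) _ =>
    sigmaLowSq_le_variance (Pm := Pm) (block_end_le l) j

lemma blockCov_le_sigmaBarSq {D : ℝ} (hb : ∀ᵐ ω ∂Pm, ∀ i j, |ω i j| ≤ D)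
    (h0 : ∀ i j, ∫ ω, ω i j ∂Pm = 0) (hq : 0 < q) (hm : 0 < nBlocks n q r) (j : Fin p) :
    blockCov n p q r Pm j j ≤ sigmaBarSq n p Pm q := by
  rw [blockCov_self hb h0 hq, inv_mul_le_iff₀ (by positivity)]
  simpa using Finset.sum_le_card_nsmul Finset.univ _ _ fun (l : Fin (nBlocks n q r)) _ =>
    variance_le_sigmaBarSq (Pm := Pm) (block_end_le l) j

lemma posSemidef_blockCov {D : ℝ} (hD : 0 ≤ D) (hb : ∀ᵐ ω ∂Pm, ∀ i j, |ω i j| ≤ D) :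
    (Matrix.of (blockCov n p q r Pm)).PosSemidef := by
  have hsum : Matrix.of (blockCov n p q r Pm) = ((nBlocks n q r * q : ℕ) : ℝ)⁻¹ •
      ∑ l : Fin (nBlocks n q r), Matrix.of fun j k => ∫ ω, blockSum n p (l * (q + r)) q j ω *
        blockSum n p (l * (q + r)) q k ω ∂Pm := by
    ext j k
    simp only [Matrix.smul_apply, Matrix.sum_apply, Matrix.of_apply, smul_eq_mul, blockCov]
  rw [hsum]
  exact (Matrix.posSemidef_sum _ fun l _ => posSemidef_of_integral_mul fun j =>
    memLp_blockSum hD hb _ j).smul (by positivity)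

end Blocks

/-! ### Rates -/

section Rates

lemma two_mul_sq_mul_exp_le_inv {p w v : ℝ} (hp : 2 ≤ p) (hw : 1 ≤ w) (hv : 0 ≤ v) :
    2 * p ^ 2 * Real.exp (-((v + 5) * w * Real.log p) + v * Real.log p) ≤ w⁻¹ := by
  have hlog : Real.log 2 ≤ Real.log p := Real.log_le_log (by norm_num) hp
  have hlog_half : 1 / 2 < Real.log p := by linarith [Real.log_two_gt_d9]
  have hprefactor : 2 * p ^ 2 = Real.exp (Real.log 2 + 2 * Real.log p) := by
    rw [two_mul (Real.log p), Real.exp_add, Real.exp_add, Real.exp_log (by norm_num),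
      Real.exp_log (by linarith), sq]
  calc 2 * p ^ 2 * Real.exp (-((v + 5) * w * Real.log p) + v * Real.log p)
      = Real.exp (Real.log 2 + 2 * Real.log p +
          (-((v + 5) * w * Real.log p) + v * Real.log p)) := by
        rw [hprefactor, ← Real.exp_add]
    _ ≤ Real.exp (-w) := by
        refine Real.exp_le_exp.2 ?_
        have hv_mul : (v + 3) * Real.log p ≤ (v + 3) * Real.log p * w :=
          le_mul_of_one_le_right (by positivity) hw
        nlinarith
    _ ≤ w⁻¹ := by
        rw [Real.exp_neg]
        exact inv_anti₀ (by linarith) (by linarith [Real.add_one_le_exp w])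

/-- Calibrates the exponential bound for block second moments: `w` stands for `n ^ (c₂ / 4)` and
`κ` for `(q D)² / n`. -/
lemma exists_bernstein_rate {C : ℝ} (hC : 0 < C) : ∃ A : ℝ, 0 < A ∧ ∀ {p w κ : ℝ}, 2 ≤ p → 1 ≤ w →
    κ * (w ^ 8 * Real.log p ^ 5) ≤ C ^ 2 → ∃ θ : ℝ, 0 ≤ θ ∧ θ * (8 * κ) ≤ 1 ∧
      2 * p ^ 2 * Real.exp (-θ * (A * w⁻¹ / Real.log p ^ 2) + θ ^ 2 * (4 * C * κ)) ≤ w⁻¹ := by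
  have hlog2 : 0 < Real.log 2 := Real.log_pos (by norm_num)
  set a : ℝ := Real.log 2 ^ 2 / (8 * C ^ 2) with ha
  set v : ℝ := 4 * C ^ 3 * a ^ 2 with hv
  have ha0 : 0 < a := by positivity
  refine ⟨(v + 5) / a, by positivity, fun {p w κ} hp hw hκ => ?_⟩
  have hlog : Real.log 2 ≤ Real.log p := Real.log_le_log (by norm_num) hp
  set L := Real.log p
  have hL0 : 0 < L := hlog2.trans_le hlog
  have : 0 < w := by linarith
  have hw_inv : w⁻¹ ≤ 1 := inv_le_one_of_one_le₀ hw
  have hκ' : κ ≤ C ^ 2 / (w ^ 8 * L ^ 5) := (le_div_iff₀ (by positivity)).2 hκ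
  refine ⟨a * w ^ 2 * L ^ 3, by positivity, ?_, ?_⟩
  · calc a * w ^ 2 * L ^ 3 * (8 * κ) ≤ a * w ^ 2 * L ^ 3 * (8 * (C ^ 2 / (w ^ 8 * L ^ 5))) := by
          gcongr
      _ = (Real.log 2 / L) ^ 2 * w⁻¹ ^ 6 := by
          rw [ha]
          field_simp
      _ ≤ 1 := mul_le_one₀ (pow_le_one₀ (by positivity) ((div_le_one hL0).2 hlog))
          (by positivity) (pow_le_one₀ (by positivity) hw_inv)
  · have hlinear : a * w ^ 2 * L ^ 3 * ((v + 5) / a * w⁻¹ / L ^ 2) = (v + 5) * w * L := by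
      field_simp
    have hquadratic : (a * w ^ 2 * L ^ 3) ^ 2 * (4 * C * κ) ≤ v * L := by
      calc (a * w ^ 2 * L ^ 3) ^ 2 * (4 * C * κ)
          ≤ (a * w ^ 2 * L ^ 3) ^ 2 * (4 * C * (C ^ 2 / (w ^ 8 * L ^ 5))) := by gcongr
        _ = v * L * w⁻¹ ^ 4 := by
            rw [hv]
            field_simp
        _ ≤ v * L := mul_le_of_le_one_right (by positivity) (pow_le_one₀ (by positivity) hw_inv)
    refine le_trans ?_ (two_mul_sq_mul_exp_le_inv hp hw (v := v) (by positivity))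
    rw [neg_mul, hlinear]
    gcongr

lemma sq_div_mul_le_sq_of_mul_log_rpow_le {x C n p c : ℝ} (hx : 0 ≤ x) (hn : 0 < n) (hp : 1 ≤ p)
    (h : x * Real.log p ^ (5 / 2 : ℝ) ≤ C * n ^ (1 / 2 - c)) :
    x ^ 2 / n * ((n ^ (c / 4)) ^ 8 * Real.log p ^ 5) ≤ C ^ 2 := by
  have hlog : 0 ≤ Real.log p := Real.log_nonneg hp
  have hlog_pow : (Real.log p ^ (5 / 2 : ℝ)) ^ 2 = Real.log p ^ 5 := by
    rw [← Real.rpow_mul_natCast hlog, ← Real.rpow_natCast]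
    norm_num
  have hn_pow : (n ^ (1 / 2 - c)) ^ 2 * (n ^ (c / 4)) ^ 8 = n := by
    rw [← Real.rpow_mul_natCast hn.le, ← Real.rpow_mul_natCast hn.le, ← Real.rpow_add hn]
    convert Real.rpow_one n using 2
    push_cast
    ring
  have hsq : x ^ 2 * Real.log p ^ 5 ≤ C ^ 2 * (n ^ (1 / 2 - c)) ^ 2 := by
    rw [← hlog_pow, ← mul_pow, ← mul_pow]
    exact pow_le_pow_left₀ (by positivity) h 2
  rw [div_mul_eq_mul_div, div_le_iff₀ hn]
  calc x ^ 2 * ((n ^ (c / 4)) ^ 8 * Real.log p ^ 5)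
      = x ^ 2 * Real.log p ^ 5 * (n ^ (c / 4)) ^ 8 := by ring
    _ ≤ C ^ 2 * (n ^ (1 / 2 - c)) ^ 2 * (n ^ (c / 4)) ^ 8 := by gcongr
    _ = C ^ 2 * n := by rw [mul_assoc, hn_pow]

lemma mul_div_sq_add_mul_sqrt_eq {A n c L : ℝ} (hn : 0 < n) (hL : 0 < L) :
    A * n ^ (-(c / 4)) / L ^ 2 * L / (n ^ (-(c / 12)) / √L) ^ 2 + n ^ (-(c / 12)) / √L * √L =
      (A + 1) * n ^ (-(c / 12)) := by
  have hcube : n ^ (-(c / 4)) = (n ^ (-(c / 12))) ^ 3 := by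
    rw [← Real.rpow_mul_natCast hn.le]
    congr 1
    push_cast
    ring
  have : 0 < n ^ (-(c / 12)) := Real.rpow_pos_of_pos hn _
  rw [hcube, div_pow, Real.sq_sqrt hL.le]
  field_simp

end Rates

/-! ### Block second moments -/

section BlockGram

variable {n p q r : ℕ}

lemma blockGram_apply {m : ℕ} (x : Matrix (Fin m) (Fin p) ℝ) (j k : Fin p) :
    blockGram q x j k = ((m * q : ℕ) : ℝ)⁻¹ * ∑ l, x l j * x l k := by
  simp only [blockGram, Matrix.smul_apply, Matrix.mul_apply, Matrix.transpose_apply, smul_eq_mul]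

lemma measurableSet_exists_lt_abs_blockGram_sub {m : ℕ} (T : Matrix (Fin p) (Fin p) ℝ) (s : ℝ) :
    MeasurableSet {x : Fin m → Fin p → ℝ | ∃ j k, s < |blockGram q (Matrix.of x) j k - T j k|} := by
  simp only [blockGram_apply, Matrix.of_apply, Set.ofPred_exists]
  exact .iUnion fun j => .iUnion fun k => measurableSet_lt measurable_const (by fun_prop)

variable {Pm : Measure (Fin n → Fin p → ℝ)} [IsProbabilityMeasure Pm]

lemma iIndepFun_indepBlockLaw :
    iIndepFun (fun l (x : Fin (nBlocks n q r) → Fin p → ℝ) => x l) (indepBlockLaw n p q r Pm) :=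
  iIndepFun_pi (X := fun _ => id) fun _ => aemeasurable_id

lemma integral_mul_indepBlockLaw (l : Fin (nBlocks n q r)) (j k : Fin p) :
    ∫ x, x l j * x l k ∂(indepBlockLaw n p q r Pm) =
      ∫ ω, blockSum n p (l * (q + r)) q j ω * blockSum n p (l * (q + r)) q k ω ∂Pm := by
  have hmeas : Measurable fun y : Fin p → ℝ => y j * y k := by fun_prop
  exact (integral_comp_eval (μ := fun l : Fin (nBlocks n q r) => Pm.map (blockVec n p q r l))
    hmeas.aestronglyMeasurable).trans
      (integral_map (measurable_blockVec l).aemeasurable hmeas.aestronglyMeasurable)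

lemma blockGram_sub_blockCov (x : Fin (nBlocks n q r) → Fin p → ℝ) (j k : Fin p) :
    blockGram q (Matrix.of x) j k - blockCov n p q r Pm j k = ((nBlocks n q r * q : ℕ) : ℝ)⁻¹ *
      ∑ l, (x l j * x l k - ∫ x, x l j * x l k ∂(indepBlockLaw n p q r Pm)) := by
  simp only [blockGram_apply, blockCov, integral_mul_indepBlockLaw, Matrix.of_apply, ← mul_sub,
    Finset.sum_sub_distrib]

variable {D : ℝ}

lemma ae_indepBlockLaw_abs_le (hD : 0 ≤ D) (hb : ∀ᵐ ω ∂Pm, ∀ i j, |ω i j| ≤ D)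
    (l : Fin (nBlocks n q r)) : ∀ᵐ x ∂(indepBlockLaw n p q r Pm), ∀ j, |x l j| ≤ q * D := by
  refine (Measure.quasiMeasurePreserving_eval
    (fun l : Fin (nBlocks n q r) => Pm.map (blockVec n p q r l)) l).ae
    (p := fun y : Fin p → ℝ => ∀ j, |y j| ≤ q * D) ?_
  refine (ae_map_iff (measurable_blockVec l).aemeasurable ?_).2
    (hb.mono fun ω hω j => abs_blockSum_le hD hω _ j)
  rw [Set.ofPred_forall]
  exact .iInter fun j => measurableSet_le (by fun_prop) measurable_const

lemma integral_sq_indepBlockLaw_le (hb : ∀ᵐ ω ∂Pm, ∀ i j, |ω i j| ≤ D)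
    (h0 : ∀ i j, ∫ ω, ω i j ∂Pm = 0) (hq : 0 < q) (l : Fin (nBlocks n q r)) (j : Fin p) :
    ∫ x, x l j ^ 2 ∂(indepBlockLaw n p q r Pm) ≤ q * sigmaBarSq n p Pm q := by
  simp only [sq, integral_mul_indepBlockLaw, integral_blockSum_mul_self hb h0 hq]
  gcongr
  exact variance_le_sigmaBarSq (block_end_le l) j

lemma indepBlockLaw_exists_lt_abs_blockGram_sub_le (hq : 0 < q) (hm : 0 < nBlocks n q r)
    (hD : 0 ≤ D) (hb : ∀ᵐ ω ∂Pm, ∀ i j, |ω i j| ≤ D) (h0 : ∀ i j, ∫ ω, ω i j ∂Pm = 0) {θ : ℝ}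
    (hθ : 0 ≤ θ) (hθD : 2 * θ * ((q * D) ^ 2 / (nBlocks n q r * q : ℕ)) ≤ 1) (s : ℝ) :
    (indepBlockLaw n p q r Pm).real
        {x | ∃ j k, s < |blockGram q (Matrix.of x) j k - blockCov n p q r Pm j k|} ≤
      2 * (p : ℝ) ^ 2 * Real.exp (-θ * s +
        θ ^ 2 * (sigmaBarSq n p Pm q * ((q * D) ^ 2 / (nBlocks n q r * q : ℕ)))) := by
  set N : ℝ := ((nBlocks n q r * q : ℕ) : ℝ) with hN
  have hN0 : 0 < N := by
    rw [hN]
    positivity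
  have hset : {x : Fin (nBlocks n q r) → Fin p → ℝ | ∃ j k,
      s < |blockGram q (Matrix.of x) j k - blockCov n p q r Pm j k|} = {x | ∃ j k, N * s <
        |∑ l, (x l j * x l k - ∫ x, x l j * x l k ∂(indepBlockLaw n p q r Pm))|} := by
    simp only [blockGram_sub_blockCov, ← hN, abs_mul, abs_of_pos (inv_pos.2 hN0),
      lt_inv_mul_iff₀ hN0]
  have hscale : θ / N * (2 * (q * D) ^ 2) ≤ 1 := hθD.trans_eq' (by ring)
  have hbound := measureReal_exists_lt_abs_sum_mul_sub_integral_le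
    (iIndepFun_indepBlockLaw (r := r) (Pm := Pm)) (fun l => measurable_pi_apply l)
    (ae_indepBlockLaw_abs_le hD hb) (integral_sq_indepBlockLaw_le hb h0 hq) (by positivity) hscale
    (N * s)
  rw [hset]
  refine hbound.trans_eq ?_
  rw [Fintype.card_fin, Fintype.card_fin]
  congr 3
  · field_simp
  · rw [hN]
    push_cast
    field_simp

lemma one_sub_indepBlockLaw_sub_le_measureReal (hr : 1 ≤ r) (hq : 0 < q) (hn : 2 * (q + r) ≤ n)
    (s : ℝ) :
    1 - (indepBlockLaw n p q r Pm).real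
        {x | ∃ j k, s < |blockGram q (Matrix.of x) j k - blockCov n p q r Pm j k|} -
          ((nBlocks n q r : ℝ) - 1) * bmix n p Pm r ≤
      Pm.real {ω | ∀ j k,
        |blockGram q (blockMatrix n p q r ω) j k - blockCov n p q r Pm j k| ≤ s} := by
  set bad : Set (Fin (nBlocks n q r) → Fin p → ℝ) :=
    {x | ∃ j k, s < |blockGram q (Matrix.of x) j k - blockCov n p q r Pm j k|}
  have hbad : MeasurableSet bad :=
    measurableSet_exists_lt_abs_blockGram_sub (Matrix.of (blockCov n p q r Pm)) s
  have hblocks : Measurable fun ω (l : Fin (nBlocks n q r)) => blockVec n p q r l ω :=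
    measurable_pi_lambda _ fun l => measurable_blockVec _
  have hcompl : {ω | ∀ j k,
      |blockGram q (blockMatrix n p q r ω) j k - blockCov n p q r Pm j k| ≤ s} =
        {ω | (fun l : Fin (nBlocks n q r) => blockVec n p q r l ω) ∈ bad}ᶜ := by
    ext ω
    simp [bad, blockMatrix]
  have hpre : MeasurableSet {ω | (fun l : Fin (nBlocks n q r) => blockVec n p q r l ω) ∈ bad} :=
    hblocks hbad
  rw [hcompl, probReal_compl_eq_one_sub hpre]
  linarith [measureReal_blockVec_mem_le (Pm := Pm) hr hq hn hbad]

theorem exists_le_measureReal_abs_blockGram_sub_blockCov_le {C c : ℝ} (hC : 0 < C) (hc : 0 ≤ c) :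
    ∃ A : ℝ, 0 < A ∧ ∀ {n p q r : ℕ}, 2 ≤ p → 1 ≤ r → r < q → 2 * (q + r) ≤ n → ∀ {D : ℝ}, 0 ≤ D →
      ∀ {Pm : Measure (Fin n → Fin p → ℝ)} [IsProbabilityMeasure Pm],
      (∀ i j, ∫ ω, ω i j ∂Pm = 0) → (∀ᵐ ω ∂Pm, ∀ i j, |ω i j| ≤ D) → sigmaBarSq n p Pm q ≤ C →
      q * D * Real.log p ^ (5 / 2 : ℝ) ≤ C * (n : ℝ) ^ (1 / 2 - c) →
      1 - (n : ℝ) ^ (-(c / 4)) - ((nBlocks n q r : ℝ) - 1) * bmix n p Pm r ≤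
        Pm.real {ω | ∀ j k, |blockGram q (blockMatrix n p q r ω) j k - blockCov n p q r Pm j k| ≤
          A * (n : ℝ) ^ (-(c / 4)) / Real.log p ^ 2} := by
  obtain ⟨A, hA, hrate⟩ := exists_bernstein_rate hC
  refine ⟨A, hA, fun {n p q r} hp hr hrq hn {D} hD {Pm} _ h0 hb hup hsize => ?_⟩
  have hn1 : (1 : ℝ) ≤ n := by exact_mod_cast (show 1 ≤ n by omega)
  have hp2 : (2 : ℝ) ≤ p := by exact_mod_cast hp
  have hnN := le_four_mul_nBlocks_mul hr hrq hn
  set N : ℝ := ((nBlocks n q r * q : ℕ) : ℝ)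
  have hκ : (q * D) ^ 2 / N ≤ 4 * ((q * D) ^ 2 / n) := by
    rw [div_le_iff₀ (by linarith), mul_div_assoc', div_mul_eq_mul_div, le_div_iff₀ (by linarith)]
    linarith [mul_le_mul_of_nonneg_left hnN (sq_nonneg (q * D))]
  obtain ⟨θ, hθ, hθκ, hθp⟩ := hrate hp2 (Real.one_le_rpow hn1 (by positivity))
    (sq_div_mul_le_sq_of_mul_log_rpow_le (by positivity) (by linarith) (by linarith) hsize)
  rw [← Real.rpow_neg (by positivity)] at hθp
  have hscale : 2 * θ * ((q * D) ^ 2 / N) ≤ 1 := by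
    linarith [mul_le_mul_of_nonneg_left hκ hθ]
  have hvar : sigmaBarSq n p Pm q * ((q * D) ^ 2 / N) ≤ 4 * C * ((q * D) ^ 2 / n) :=
    (mul_le_mul hup hκ (by positivity) hC.le).trans_eq (by ring)
  have hindep := indepBlockLaw_exists_lt_abs_blockGram_sub_le (by omega) (nBlocks_pos hr hn) hD hb
    h0 hθ hscale (A * (n : ℝ) ^ (-(c / 4)) / Real.log p ^ 2)
  refine le_trans ?_ (one_sub_indepBlockLaw_sub_le_measureReal hr (by omega) hn _)
  gcongr
  refine hindep.trans (le_trans ?_ hθp)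
  gcongr

end BlockGram

/-! ### The conditional law of the bootstrap statistic -/

section Bootstrap

lemma iSup_le_iff_forall_le {ι : Type*} [Finite ι] [Nonempty ι] {y : ι → ℝ} {t : ℝ} :
    (⨆ j, y j) ≤ t ↔ ∀ j, y j ≤ t :=
  ciSup_le_iff (Set.finite_range y).bddAbove

variable {n p q r : ℕ}

lemma isCenteredGaussian_map_vecMul_smul {m : ℕ} (x : Matrix (Fin m) (Fin p) ℝ) :
    IsCenteredGaussian (blockGram q x)
      ((gaussPi m).map (· ᵥ* ((√((m * q : ℕ) : ℝ))⁻¹ • x))) := by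
  convert (isCenteredGaussian_gaussPi m).map_vecMul ((√((m * q : ℕ) : ℝ))⁻¹ • x) using 1
  rw [Matrix.mul_one, Matrix.transpose_smul, Matrix.smul_mul, Matrix.mul_smul, smul_smul,
    ← mul_inv, Real.mul_self_sqrt (Nat.cast_nonneg _), blockGram]

lemma WBMBraw_eq_iSup_vecMul (ω : Fin n → Fin p → ℝ) (e : Fin (nBlocks n q r) → ℝ) :
    WBMBraw n p q r ω e =
      ⨆ j, (e ᵥ* ((√((nBlocks n q r * q : ℕ) : ℝ))⁻¹ • blockMatrix n p q r ω)) j := by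
  simp only [WBMBraw, Matrix.vecMul_smul, Pi.smul_apply, smul_eq_mul, ← div_eq_inv_mul]
  rfl

lemma gaussPi_WBMBraw_le_toReal [NeZero p] (ω : Fin n → Fin p → ℝ) (t : ℝ) :
    (gaussPi (nBlocks n q r) {e | WBMBraw n p q r ω e ≤ t}).toReal =
      ((gaussPi (nBlocks n q r)).map
        (· ᵥ* ((√((nBlocks n q r * q : ℕ) : ℝ))⁻¹ • blockMatrix n p q r ω))).real
          {y | ∀ j, y j ≤ t} := by
  rw [measureReal_def, Measure.map_apply (continuous_vecMul _).measurable
    (measurableSet_forall_apply_le t)]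
  simp only [WBMBraw_eq_iSup_vecMul, iSup_le_iff_forall_le]
  rfl

lemma isCenteredGaussian_of_map_sum {ι : Type*} [Fintype ι] {S : Matrix ι ι ℝ}
    {ν : Measure (ι → ℝ)} (hS : S.PosSemidef)
    (hν : ∀ a : ι → ℝ, ν.map (fun y => ∑ j, a j * y j) =
      gaussianReal 0 (∑ j, ∑ k, a j * a k * S j k).toNNReal) : IsCenteredGaussian S ν := by
  refine ⟨hS, fun a => (hν a).trans ?_⟩
  simp only [dotProduct, Matrix.mulVec, Finset.mul_sum, mul_assoc, mul_comm (S _ _)]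

end Bootstrap

/-- Theorem B.3, validity of the block multiplier bootstrap: for
possibly dependent, bounded, mean-zero data, if `c₁ ≤ σ̲²(q) ≤ σ̄²(q) ≤ C₁` and
`q D_n log^{5/2} p ≤ C₁ n^{1/2-c₂}`, then with probability at least
`1 - C n^{-c} - (m-1) b_r`, the conditional law (given the data) of
`max_j (mq)^{-1/2} Σ_l ε_l S_{lj}` is within `C' n^{-c'}` of the law of `max_j Y̌_j` in
Kolmogorov distance. -/
theorem statement19 :
    ∀ c₁ C₁ c₂ : ℝ, 0 < c₁ → c₁ ≤ C₁ → 0 < c₂ → c₂ < 1 / 2 →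
    ∃ c c' C C' : ℝ, 0 < c ∧ 0 < c' ∧ 0 < C ∧ 0 < C' ∧
      ∀ (n p q r : ℕ), 2 ≤ p → 1 ≤ r → r < q → 2 * (q + r) ≤ n →
      ∀ D : ℝ, 1 ≤ D →
      ∀ Pm : Measure (Fin n → Fin p → ℝ), IsProbabilityMeasure Pm →
      (∀ i j, ∫ ω, ω i j ∂Pm = 0) →
      (∀ᵐ ω ∂Pm, ∀ i j, |ω i j| ≤ D) →
      c₁ ≤ sigmaLowSq n p Pm q →
      sigmaBarSq n p Pm q ≤ C₁ →
      (q : ℝ) * D * Real.log p ^ ((5 : ℝ) / 2) ≤ C₁ * (n : ℝ) ^ ((1 : ℝ) / 2 - c₂) →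
      ∀ ν : Measure (Fin p → ℝ), IsProbabilityMeasure ν →
      (∀ a : Fin p → ℝ,
        Measure.map (fun y => ∑ j, a j * y j) ν =
          gaussianReal 0
            (Real.toNNReal (∑ j, ∑ k, a j * a k * blockCov n p q r Pm j k))) →
      1 - C * (n : ℝ) ^ (-c) - ((nBlocks n q r : ℝ) - 1) * bmix n p Pm r ≤
        (Pm {ω | ∀ t : ℝ,
            |(gaussPi (nBlocks n q r) {e | WBMBraw n p q r ω e ≤ t}).toReal -
              (ν {y | (⨆ j, y j) ≤ t}).toReal| ≤ C' * (n : ℝ) ^ (-c')}).toReal := by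
  intro c₁ C₁ c₂ hc₁ hcC hc₂ _
  obtain ⟨A, hA, hgood⟩ :=
    exists_le_measureReal_abs_blockGram_sub_blockCov_le (hc₁.trans_le hcC) hc₂.le
  obtain ⟨K, hK, hcompare⟩ := exists_abs_measureReal_forall_le_sub_le hc₁ hcC
  refine ⟨c₂ / 4, c₂ / 12, 1, K * (A + 1), by positivity, by positivity, one_pos, by positivity, ?_⟩
  intro n p q r hp hr hrq hn D hD Pm _ h0 hb hlow hup hsize ν _ hν
  rw [one_mul]
  refine (hgood hp hr hrq hn (zero_le_one.trans hD) h0 hb hup hsize).trans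
    (measureReal_mono fun ω hω t => ?_)
  have : NeZero p := ⟨by omega⟩
  have : Nontrivial (Fin p) := Fin.nontrivial_iff_two_le.2 hp
  have hn0 : (0 : ℝ) < n := by exact_mod_cast (show 0 < n by omega)
  have hlog : 0 < Real.log p := Real.log_pos (by exact_mod_cast hp)
  have hq : 0 < q := by omega
  have hm := nBlocks_pos (q := q) hr hn
  rw [gaussPi_WBMBraw_le_toReal]
  simp only [iSup_le_iff_forall_le]
  refine (hcompare (isCenteredGaussian_map_vecMul_smul _) (isCenteredGaussian_of_map_sum
    (posSemidef_blockCov (zero_le_one.trans hD) hb) hν)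
    (fun j => hlow.trans (sigmaLowSq_le_blockCov hb h0 hq hm j))
    (fun j => (blockCov_le_sigmaBarSq hb h0 hq hm j).trans hup) hω
    (ε := (n : ℝ) ^ (-(c₂ / 12)) / √(Real.log p)) (by positivity) t).trans_eq ?_
  rw [Fintype.card_fin, mul_div_sq_add_mul_sqrt_eq hn0 hlog, mul_assoc]

end ManyMoment
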